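/- arXiv:1312.6076 — 2 statements merged into one kernel-verified Lean document; each statement's English description precedes it below -/
import Mathlib

section
/- (Pointwise convergence of the potential to the potential of the initial datum.) Let d > 2s and let ρ be an admissible weight with exponents (γ₀,γ). Let u be a weak solution of the Cauchy problem ρ u_t + (-Δ)^s(u^m) = 0 with initial datum the positive finite Radon measure μ; let U(x,t) := k ∫_{ℝ^d} |x-y|^{2s-d} u(y,t) ρ(y) dy and let U^μ(x) := k ∫_{ℝ^d} |x-y|^{2s-d} dμ(y) be the Riesz potential of μ. Then there is a Lebesgue-null set N ⊂ (0,∞) such that for EVERY x ∈ ℝ^d, U(x,t) → U^μ(x) as t → 0 with t ∉ N. -/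
open MeasureTheory Filter Topology Set
open scoped ENNReal NNReal

noncomputable section

/-- `d`-dimensional Euclidean space. -/
abbrev Ed (d : ℕ) : Type := EuclideanSpace ℝ (Fin d)

/-- An admissible weight with exponents `(γ₀, γ)` and constants `0 < c < C`:
a measurable, everywhere positive function comparable to `|x|^{-γ₀}` near the
origin and to `|x|^{-γ}` at infinity. -/
def AdmissibleWeight (d : ℕ) (ρ : Ed d → ℝ) (γ₀ γ c C : ℝ) : Prop :=
  0 < c ∧ c < C ∧ Measurable ρ ∧ (∀ x, 0 < ρ x) ∧
    (∀ᵐ x ∂(volume : Measure (Ed d)), ‖x‖ ≤ 1 →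
      c * ‖x‖ ^ (-γ₀) ≤ ρ x ∧ ρ x ≤ C * ‖x‖ ^ (-γ₀)) ∧
    (∀ᵐ x ∂(volume : Measure (Ed d)), 1 < ‖x‖ →
      c * ‖x‖ ^ (-γ) ≤ ρ x ∧ ρ x ≤ C * ‖x‖ ^ (-γ))

/-- The Gagliardo bilinear form `E(v,w)` of order `s` with normalizing constant `κ`. -/
def gagliardoE (d : ℕ) (s κ : ℝ) (v w : Ed d → ℝ) : ℝ :=
  (κ / 2) * ∫ p : Ed d × Ed d,
    (v p.1 - v p.2) * (w p.1 - w p.2) / ‖p.1 - p.2‖ ^ ((d : ℝ) + 2 * s)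

/-- The squared homogeneous fractional Sobolev seminorm `‖v‖_{Ḣ^s}² = E(v,v)`,
with values in `[0,∞]`. -/
def gagliardoSq (d : ℕ) (s κ : ℝ) (v : Ed d → ℝ) : ℝ≥0∞ :=
  ENNReal.ofReal (κ / 2) * ∫⁻ p : Ed d × Ed d,
    ENNReal.ofReal ((v p.1 - v p.2) ^ 2 / ‖p.1 - p.2‖ ^ ((d : ℝ) + 2 * s))

/-- The weighted `L^p` norm `‖v‖_{p,ρ}`, valued in `[0,∞]`. -/
def wnorm (d : ℕ) (p : ℝ) (ρ v : Ed d → ℝ) : ℝ≥0∞ :=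
  (∫⁻ x : Ed d, ENNReal.ofReal (|v x| ^ p * ρ x)) ^ (1 / p)

/-- Smooth compactly supported test functions on `ℝ^d × (0,∞)`. -/
def IsTestFn (d : ℕ) (φ : Ed d × ℝ → ℝ) : Prop :=
  ContDiff ℝ (⊤ : ℕ∞) φ ∧ HasCompactSupport φ ∧ tsupport φ ⊆ univ ×ˢ Ioi (0 : ℝ)

/-- Conditions (i)–(iii) of the definition of weak solution of
`ρ u_t + (-Δ)^s(u^m) = 0` on `ℝ^d × (0,∞)` (no initial datum prescribed). -/
structure WeakSolCore (d : ℕ) (s m κ : ℝ) (ρ : Ed d → ℝ) (u : Ed d → ℝ → ℝ) : Prop where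
  measurable : Measurable (Function.uncurry u)
  nonneg : ∀ x t, 0 ≤ u x t
  /-- (i), first part: `ess sup_{t>0} ∫ u(·,t) ρ < ∞`. -/
  massBound : ∃ M : ℝ, ∀ᵐ t ∂(volume.restrict (Ioi (0 : ℝ))),
    Integrable (fun x : Ed d => u x t * ρ x) ∧ (∫ x : Ed d, u x t * ρ x) ≤ M
  /-- (i), second part: `u` essentially bounded on `ℝ^d × (τ,∞)` for every `τ > 0`. -/
  essBdd : ∀ τ : ℝ, 0 < τ → ∃ B : ℝ,
    ∀ᵐ p ∂(volume : Measure (Ed d × ℝ)), τ < p.2 → u p.1 p.2 ≤ B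
  /-- (ii), first part: `‖u^m(·,t)‖_{Ḣ^s} < ∞` for a.e. `t > 0`. -/
  energyFinite : ∀ᵐ t ∂(volume.restrict (Ioi (0 : ℝ))),
    gagliardoSq d s κ (fun x => u x t ^ m) < ⊤
  /-- (ii), second part: `t ↦ ‖u^m(·,t)‖_{Ḣ^s}²` locally integrable on `(0,∞)`. -/
  energyLocInt : ∀ t₁ t₂ : ℝ, 0 < t₁ → t₁ < t₂ →
    (∫⁻ t in Ioc t₁ t₂, gagliardoSq d s κ (fun x => u x t ^ m)) ≠ ⊤
  /-- (iii): the weak formulation against all test functions. -/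
  weakForm : ∀ φ : Ed d × ℝ → ℝ, IsTestFn d φ →
    -(∫ t in Ioi (0 : ℝ), ∫ x : Ed d, u x t * deriv (fun τ => φ (x, τ)) t * ρ x)
      + ∫ t in Ioi (0 : ℝ),
          gagliardoE d s κ (fun x => u x t ^ m) (fun x => φ (x, t)) = 0

/-- Condition (iv): `ρ(·)u(·,t) → μ` as `t → 0` essentially, tested against all
bounded continuous functions. -/
def HasInitialTrace (d : ℕ) (ρ : Ed d → ℝ) (u : Ed d → ℝ → ℝ)
    (μ : Measure (Ed d)) : Prop :=
  ∃ N : Set ℝ, volume N = 0 ∧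
    ∀ φ : Ed d → ℝ, Continuous φ → (∃ B : ℝ, ∀ x, |φ x| ≤ B) →
      Tendsto (fun t => ∫ x : Ed d, φ x * (u x t * ρ x))
        (𝓝[(Ioi (0 : ℝ)) \ N] 0) (𝓝 (∫ x, φ x ∂μ))

/-- Weak solution of the Cauchy problem with initial datum `μ`. -/
def IsWeakSolution (d : ℕ) (s m κ : ℝ) (ρ : Ed d → ℝ) (μ : Measure (Ed d))
    (u : Ed d → ℝ → ℝ) : Prop :=
  WeakSolCore d s m κ ρ u ∧ HasInitialTrace d ρ u μ

/-- The Riesz potential (of order `2s`, constant `k`) of `ρ(·)u(·,t)`, valued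
in `[0,∞]`. -/
def rieszPotU (d : ℕ) (s k : ℝ) (ρ : Ed d → ℝ) (u : Ed d → ℝ → ℝ)
    (x : Ed d) (t : ℝ) : ℝ≥0∞ :=
  ENNReal.ofReal k *
    ∫⁻ y : Ed d, (ENNReal.ofReal ‖x - y‖) ^ (2 * s - (d : ℝ)) *
      ENNReal.ofReal (u y t * ρ y)

/-- The Riesz potential (of order `2s`, constant `k`) of a measure `μ`. -/
def rieszPotMeas (d : ℕ) (s k : ℝ) (μ : Measure (Ed d)) (x : Ed d) : ℝ≥0∞ :=
  ENNReal.ofReal k *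
    ∫⁻ y, (ENNReal.ofReal ‖x - y‖) ^ (2 * s - (d : ℝ)) ∂μ

section RadialProfile

/-- The smooth bounded substitute `(ε + r²)^(-a/2)` for the Riesz profile `r^(-a)`. -/
def bubble (ε a r : ℝ) : ℝ := (ε + r ^ 2) ^ (-(a / 2))

/-- A smooth radial cutoff, equal to `1` for `r ≤ R` and to `0` for `r ≥ 2R`. -/
def cutoff (R r : ℝ) : ℝ := Real.smoothTransition (2 - (r / R) ^ 2)

lemma rpow_neg_convex {q x y θ : ℝ} (hx : 0 < x) (hy : 0 < y) (hq : 0 ≤ q)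
    (h0 : 0 ≤ θ) (h1 : θ ≤ 1) :
    (θ * x + (1 - θ) * y) ^ (-q) ≤ θ * x ^ (-q) + (1 - θ) * y ^ (-q) := by
  have h1' : 0 ≤ 1 - θ := by linarith
  have ht : 0 < θ * x + (1 - θ) * y := by
    rcases h0.eq_or_lt with h | h
    · subst h; simpa using hy
    · have := mul_pos h hx
      have := mul_nonneg h1' hy.le
      linarith
  have hlog := strictConcaveOn_log_Ioi.concaveOn.2 (mem_Ioi.2 hx) (mem_Ioi.2 hy) h0 h1' (by ring)
  have hexp := convexOn_exp.2 (mem_univ (-q * Real.log x)) (mem_univ (-q * Real.log y)) h0 h1'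
    (by ring)
  simp only [smul_eq_mul] at hlog hexp
  rw [Real.rpow_def_of_pos ht, Real.rpow_def_of_pos hx, Real.rpow_def_of_pos hy]
  calc _ ≤ Real.exp (θ * (-q * Real.log x) + (1 - θ) * (-q * Real.log y)) := by
        apply Real.exp_le_exp.2
        nlinarith
    _ ≤ _ := by
        refine hexp.trans (le_of_eq ?_)
        ring_nf

variable {ε a r z R : ℝ}

lemma bubble_pos (hε : 0 < ε) : 0 < bubble ε a r := by
  unfold bubble; positivity

lemma bubble_le (hε : 0 < ε) (ha : 0 ≤ a) : bubble ε a r ≤ ε ^ (-(a / 2)) :=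
  Real.rpow_le_rpow_of_nonpos hε (by nlinarith [sq_nonneg r]) (by linarith)

lemma bubble_le_rpow (hε : 0 < ε) (ha : 0 ≤ a) (hr : 0 < r) : bubble ε a r ≤ r ^ (-a) := by
  have : r ^ (-a) = (r ^ 2) ^ (-(a / 2)) := by
    rw [← Real.rpow_natCast, ← Real.rpow_mul hr.le]; congr 1; push_cast; ring
  rw [this]
  exact Real.rpow_le_rpow_of_nonpos (by positivity) (by linarith) (by linarith)

lemma sub_bubble_le (hε : 0 < ε) (ha : 0 ≤ a) :
    ε ^ (-(a / 2)) - bubble ε a r ≤ ε ^ (-(a / 2)) * (a / 2 / ε) * r ^ 2 := by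
  have h1 : ε + r ^ 2 = ε * (1 + r ^ 2 / ε) := by field_simp
  have hp : 0 < 1 + r ^ 2 / ε := by positivity
  have h2 : 1 - a / 2 * (r ^ 2 / ε) ≤ (1 + r ^ 2 / ε) ^ (-(a / 2)) := by
    rw [Real.rpow_def_of_pos hp]
    have hl := Real.log_le_sub_one_of_pos hp
    have he := Real.add_one_le_exp (Real.log (1 + r ^ 2 / ε) * -(a / 2))
    nlinarith
  unfold bubble
  rw [h1, Real.mul_rpow hε.le hp.le]
  have h3 : 0 < ε ^ (-(a / 2)) := by positivity
  have := mul_le_mul_of_nonneg_left h2 h3.le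
  calc _ ≤ ε ^ (-(a / 2)) * (a / 2 * (r ^ 2 / ε)) := by linarith
    _ = _ := by ring

lemma rpow_neg_half_sq (hz : 0 < z) : (z ^ 2) ^ (-(a / 2)) = z ^ (-a) := by
  rw [← Real.rpow_natCast, ← Real.rpow_mul hz.le]; congr 1; push_cast; ring

lemma mul_bubble_div (hε : 0 < ε) (hz : 0 < z) :
    z ^ (-a) * bubble ε a (r / z) = (ε * z ^ 2 + r ^ 2) ^ (-(a / 2)) := by
  unfold bubble
  rw [← rpow_neg_half_sq hz, ← Real.mul_rpow (by positivity) (by positivity)]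
  congr 1
  field_simp

/-- The Riesz-type profile is superharmonic in the paired form adapted to the inversion in the
sphere of radius `r`. -/
lemma bubble_pairing (hε : 0 < ε) (ha : 0 ≤ a) (hz : 0 < z) :
    0 ≤ bubble ε a r - bubble ε a (r * z) +
      z ^ (-a) * (bubble ε a r - bubble ε a (r / z)) := by
  have hA : 0 < ε + r ^ 2 := by positivity
  have hA' : 0 < z ^ 2 * (ε + r ^ 2) := by positivity
  have hθ0 : 0 ≤ ε / (ε + r ^ 2) := by positivity
  have hθ1 : ε / (ε + r ^ 2) ≤ 1 := by
    rw [div_le_one hA]; nlinarith [sq_nonneg r]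
  have h1 := rpow_neg_convex (q := a / 2) hA hA' (by positivity) hθ0 hθ1
  have h2 := rpow_neg_convex (q := a / 2) hA' hA (by positivity) hθ0 hθ1
  have e1 : ε / (ε + r ^ 2) * (ε + r ^ 2) + (1 - ε / (ε + r ^ 2)) * (z ^ 2 * (ε + r ^ 2)) =
      ε + (r * z) ^ 2 := by field_simp; ring
  have e2 : ε / (ε + r ^ 2) * (z ^ 2 * (ε + r ^ 2)) + (1 - ε / (ε + r ^ 2)) * (ε + r ^ 2) =
      ε * z ^ 2 + r ^ 2 := by field_simp; ring
  rw [e1] at h1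
  rw [e2] at h2
  rw [mul_sub, mul_bubble_div hε hz]
  have h3 : (z ^ 2 * (ε + r ^ 2)) ^ (-(a / 2)) = z ^ (-a) * bubble ε a r := by
    rw [Real.mul_rpow (by positivity) (by positivity), rpow_neg_half_sq hz]; rfl
  rw [h3] at h1 h2
  change bubble ε a (r * z) ≤ _ at h1
  change _ ≤ _ + _ * bubble ε a r at h2
  change _ ≤ _ * bubble ε a r + _ at h1
  nlinarith

lemma bubble_mul_le (hε : 0 < ε) (ha : 0 ≤ a) (hz : 0 < z) (hz1 : z ≤ 1) :
    bubble ε a (r * z) ≤ z ^ (-a) * bubble ε a r := by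
  rcases eq_or_ne r 0 with h | h
  · have h3 : 1 ≤ z ^ (-a) := Real.one_le_rpow_of_pos_of_le_one_of_nonpos hz hz1 (by linarith)
    subst h
    have := bubble_pos (a := a) (r := 0) hε
    simp only [zero_mul]
    nlinarith
  · have h3 : (z ^ 2 * (ε + r ^ 2)) ^ (-(a / 2)) = z ^ (-a) * bubble ε a r := by
      rw [Real.mul_rpow (by positivity) (by positivity), rpow_neg_half_sq hz]; rfl
    rw [← h3]
    have : z ^ 2 ≤ 1 := by nlinarith
    exact Real.rpow_le_rpow_of_nonpos (by positivity) (by nlinarith) (by linarith)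

lemma bubble_le_mul_div (hε : 0 < ε) (ha : 0 ≤ a) (hz : 0 < z) (hz1 : z ≤ 1) :
    bubble ε a r ≤ z ^ (-a) * bubble ε a (r / z) := by
  rw [mul_bubble_div hε hz]
  have : z ^ 2 ≤ 1 := by nlinarith
  exact Real.rpow_le_rpow_of_nonpos (by positivity) (by nlinarith) (by linarith)

lemma exists_lipschitz_of_deriv_eq_zero {f : ℝ → ℝ} (hf : ContDiff ℝ 1 f)
    (h : ∀ x, x ∉ Icc (0 : ℝ) 1 → deriv f x = 0) :
    ∃ C, 0 ≤ C ∧ ∀ x y, |f x - f y| ≤ C * |x - y| := by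
  obtain ⟨C, hC⟩ := isCompact_Icc.exists_bound_of_continuousOn (s := Icc (0 : ℝ) 1)
    (hf.continuous_deriv le_rfl).continuousOn
  have hC0 : 0 ≤ C := (norm_nonneg _).trans (hC 0 (by simp))
  refine ⟨C, hC0, fun x y => ?_⟩
  have := convex_univ.norm_image_sub_le_of_norm_deriv_le (f := f) (C := C)
    (fun x _ => (hf.differentiable one_ne_zero) x) (fun x _ => by
      by_cases hx : x ∈ Icc (0 : ℝ) 1
      · exact hC x hx
      · rw [h x hx]; simpa using hC0) (mem_univ y) (mem_univ x)
  simpa using this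

lemma exists_second_difference_bound {f : ℝ → ℝ} (hf : ContDiff ℝ 2 f) {b₀ b₁ : ℝ}
    (h0 : ∀ x < 0, f x = b₀) (h1 : ∀ x > 1, f x = b₁) :
    ∃ C, 0 ≤ C ∧ (∀ x y, |f x - f y| ≤ C * |x - y|) ∧
      ∀ x h, |(f (x + h) - f x) - (f x - f (x - h))| ≤ C * h ^ 2 := by
  have hd : ∀ x, x ∉ Icc (0 : ℝ) 1 → deriv f =ᶠ[𝓝 x] fun _ => 0 := by
    intro x hx
    rw [mem_Icc, not_and_or, not_le, not_le] at hx
    rcases hx with hx | hx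
    · filter_upwards [Iio_mem_nhds hx] with y hy
      have : f =ᶠ[𝓝 y] fun _ => b₀ := by
        filter_upwards [Iio_mem_nhds hy] with w hw using h0 w hw
      rw [this.deriv_eq, deriv_const]
    · filter_upwards [Ioi_mem_nhds hx] with y hy
      have : f =ᶠ[𝓝 y] fun _ => b₁ := by
        filter_upwards [Ioi_mem_nhds hy] with w hw using h1 w hw
      rw [this.deriv_eq, deriv_const]
  have hf' : ContDiff ℝ 1 (deriv f) := by
    have : ContDiff ℝ (1 + 1) f := by simpa [one_add_one_eq_two] using hf
    exact (contDiff_succ_iff_deriv.1 this).2.2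
  obtain ⟨C₁, hC₁, hL₁⟩ := exists_lipschitz_of_deriv_eq_zero (hf.of_le (by norm_num))
    (fun x hx => (hd x hx).eq_of_nhds)
  obtain ⟨C₂, hC₂, hL₂⟩ := exists_lipschitz_of_deriv_eq_zero hf'
    (fun x hx => by rw [(hd x hx).deriv_eq, deriv_const])
  refine ⟨max C₁ C₂, hC₁.trans (le_max_left _ _), fun x y => (hL₁ x y).trans ?_, fun x h => ?_⟩
  · gcongr; exact le_max_left _ _
  have hdf : Differentiable ℝ f := hf.differentiable two_ne_zero
  have hder : ∀ y, HasDerivAt (fun y => f (y + h) - f y) (deriv f (y + h) - deriv f y) y := by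
    intro y
    exact ((hdf (y + h)).hasDerivAt.comp_add_const y h).sub (hdf y).hasDerivAt
  have := convex_univ.norm_image_sub_le_of_norm_hasDerivWithin_le (C := C₂ * |h|)
    (fun y _ => (hder y).hasDerivWithinAt) (fun y _ => by
      simpa using hL₂ (y + h) y) (mem_univ (x - h)) (mem_univ x)
  simp only [sub_add_cancel, Real.norm_eq_abs] at this
  have h2 : x - (x - h) = h := by ring
  rw [h2] at this
  calc _ ≤ C₂ * |h| * |h| := this
    _ = C₂ * h ^ 2 := by rw [mul_assoc, abs_mul_abs_self, sq]
    _ ≤ _ := by gcongr; exact le_max_right _ _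

lemma cutoff_nonneg : 0 ≤ cutoff R r := Real.smoothTransition.nonneg _

lemma cutoff_le_one : cutoff R r ≤ 1 := Real.smoothTransition.le_one _

lemma cutoff_eq_one (hR : 0 < R) (hr : 0 ≤ r) (h : r ≤ R) : cutoff R r = 1 := by
  apply Real.smoothTransition.one_of_one_le
  have : r / R ≤ 1 := (div_le_one hR).2 h
  have : 0 ≤ r / R := by positivity
  nlinarith

lemma cutoff_eq_zero (hR : 0 < R) (h : 2 * R ≤ r) : cutoff R r = 0 := by
  apply Real.smoothTransition.zero_of_nonpos
  have : 2 ≤ r / R := (le_div_iff₀ hR).2 h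
  nlinarith

lemma cutoff_anti (hR : 0 < R) {r' : ℝ} (hr : 0 ≤ r) (h : r ≤ r') : cutoff R r' ≤ cutoff R r := by
  apply Real.smoothTransition.monotone
  gcongr

lemma exists_cutoff_pairing (ha : 0 < a) :
    ∃ K, 0 ≤ K ∧ ∀ R r z : ℝ, 0 < R → 0 < r → 0 < z → z < 1 →
      -(K * z ^ (-a) * (1 - z) ^ 2) ≤
        cutoff R r - cutoff R (r / z) + z ^ (-a) * (cutoff R r - cutoff R (r * z)) := by
  let Z : ℝ → ℝ := fun l => Real.smoothTransition (2 - Real.exp l)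
  have hZ : ContDiff ℝ 2 Z :=
    (Real.smoothTransition.contDiff (n := 2)).comp (contDiff_const.sub Real.contDiff_exp)
  obtain ⟨C, hC, hL, hS⟩ := exists_second_difference_bound hZ (b₀ := 1) (b₁ := 0)
    (fun x hx => by
      apply Real.smoothTransition.one_of_one_le
      have := Real.exp_le_one_iff.2 hx.le
      linarith)
    (fun x hx => by
      apply Real.smoothTransition.zero_of_nonpos
      have := Real.add_one_le_exp x
      linarith)
  have hcut : ∀ R r : ℝ, 0 < R → 0 < r → cutoff R r = Z (2 * Real.log (r / R)) := by
    intro R r hR hr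
    simp only [cutoff, Z]
    rw [mul_comm, ← Real.rpow_def_of_pos (by positivity)]
    norm_num
  refine ⟨max 4 (16 * (C + C * (a / 2))), by positivity, fun R r z hR hr hz hz1 => ?_⟩
  have hpow : 1 ≤ z ^ (-a) := Real.one_le_rpow_of_pos_of_le_one_of_nonpos hz hz1.le (by linarith)
  rcases le_or_gt z (1 / 2) with hz2 | hz2
  · have h1 : cutoff R (r / z) ≤ cutoff R r :=
      cutoff_anti hR hr.le ((le_div_iff₀ hz).2 (by nlinarith))
    have h2 : cutoff R (r * z) ≤ 1 := cutoff_le_one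
    have h3 : 0 ≤ cutoff R r := cutoff_nonneg
    have h4 : 1 ≤ max 4 (16 * (C + C * (a / 2))) * (1 - z) ^ 2 := by
      calc (1 : ℝ) = 4 * (1 / 2) ^ 2 := by norm_num
        _ ≤ _ := by gcongr; exacts [le_max_left _ _, by linarith]
    nlinarith
  · set l := 2 * Real.log (r / R)
    set h := -2 * Real.log z with hh
    have hlz : Real.log z < 0 := Real.log_neg hz hz1
    have hh0 : 0 < h := by rw [hh]; linarith
    have e1 : cutoff R (r / z) = Z (l + h) := by
      rw [hcut R _ hR (by positivity), div_right_comm, Real.log_div (by positivity) hz.ne']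
      congr 1; rw [hh]; ring
    have e2 : cutoff R (r * z) = Z (l - h) := by
      rw [hcut R _ hR (by positivity), mul_div_right_comm, Real.log_mul (by positivity) hz.ne']
      congr 1; rw [hh]; ring
    rw [e1, e2, hcut R r hR hr]
    have hs := (abs_le.1 (hS l h)).2
    have hl := (abs_le.1 (hL l (l - h))).1
    rw [show l - (l - h) = h by ring, abs_of_pos hh0] at hl
    have hz3 : z ^ (-a) - 1 ≤ a / 2 * h * z ^ (-a) := by
      have : z ^ (a) ≥ 1 - a / 2 * h := by
        rw [Real.rpow_def_of_pos hz]
        have := Real.add_one_le_exp (Real.log z * a)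
        rw [hh]; linarith
      have h5 : z ^ (-a) * z ^ a = 1 := by rw [← Real.rpow_add hz]; simp
      nlinarith
    have hh4 : h ≤ 4 * (1 - z) := by
      have := Real.one_sub_inv_le_log_of_pos hz
      have h6 : z⁻¹ - 1 ≤ 2 * (1 - z) := by
        have : z⁻¹ - 1 = (1 - z) * z⁻¹ := by field_simp
        rw [this, mul_comm]
        have h7 : z⁻¹ ≤ 2 := by
          rw [inv_le_comm₀ hz (by norm_num)]; linarith
        exact mul_le_mul_of_nonneg_right h7 (by linarith)
      rw [hh]; linarith
    have hh2 : h ^ 2 ≤ 16 * (1 - z) ^ 2 := by nlinarith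
    have key : -((C + C * (a / 2)) * z ^ (-a) * h ^ 2) ≤
        Z l - Z (l + h) + z ^ (-a) * (Z l - Z (l - h)) := by
      have a1 : z ^ (-a) * (Z l - Z (l - h)) =
        (Z l - Z (l - h)) + (z ^ (-a) - 1) * (Z l - Z (l - h)) := by ring
      have a2 : -((a / 2 * h * z ^ (-a)) * (C * h)) ≤ (z ^ (-a) - 1) * (Z l - Z (l - h)) := by
        have b1 : (z ^ (-a) - 1) * (C * h) ≤ (a / 2 * h * z ^ (-a)) * (C * h) := by gcongr
        have b2 : 0 ≤ z ^ (-a) - 1 := by linarith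
        nlinarith
      have a3 : C * h ^ 2 ≤ C * h ^ 2 * z ^ (-a) := le_mul_of_one_le_right (by positivity) hpow
      rw [a1]
      linarith
    refine le_trans (neg_le_neg ?_) key
    calc (C + C * (a / 2)) * z ^ (-a) * h ^ 2
        ≤ (C + C * (a / 2)) * z ^ (-a) * (16 * (1 - z) ^ 2) := by gcongr
      _ = 16 * (C + C * (a / 2)) * z ^ (-a) * (1 - z) ^ 2 := by ring
      _ ≤ _ := by gcongr; exact le_max_right _ _

/-- The truncated bubble. -/
def profile (ε a R r : ℝ) : ℝ := bubble ε a r * cutoff R r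

lemma exists_profile_pairing (ha : 0 < a) :
    ∃ K, 0 ≤ K ∧ ∀ ε R r z : ℝ, 0 < ε → 0 < R → 0 < r → 0 < z → z < 1 →
      -(if R ≤ r then K * r ^ (-a) * (z ^ (-a) * (1 - z) ^ 2) else 0) ≤
        profile ε a R r - profile ε a R (r * z) +
          z ^ (-a) * (profile ε a R r - profile ε a R (r / z)) := by
  obtain ⟨K, hK, h⟩ := exists_cutoff_pairing ha
  refine ⟨K, hK, fun ε R r z hε hR hr hz hz1 => ?_⟩
  have hp := mul_nonneg (cutoff_nonneg (R := R) (r := r))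
    (bubble_pairing (r := r) hε ha.le hz)
  have hzp : 0 < z ^ (-a) := by positivity
  have hw := bubble_pos (a := a) (r := r) hε
  have c1 : cutoff R (r / z) ≤ cutoff R r :=
    cutoff_anti hR hr.le ((le_div_iff₀ hz).2 (by nlinarith))
  have c2 : cutoff R r ≤ cutoff R (r * z) := cutoff_anti hR (by positivity) (by nlinarith)
  have b1 := bubble_mul_le (r := r) hε ha.le hz hz1.le
  have b2 := bubble_le_mul_div (r := r) hε ha.le hz hz1.le
  have d1 := mul_le_mul_of_nonneg_right b1 (sub_nonneg.2 c2)
  have d2 := mul_le_mul_of_nonneg_right b2 (sub_nonneg.2 c1)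
  have main : bubble ε a r * (cutoff R r - cutoff R (r / z) +
      z ^ (-a) * (cutoff R r - cutoff R (r * z))) ≤
      profile ε a R r - profile ε a R (r * z) +
          z ^ (-a) * (profile ε a R r - profile ε a R (r / z)) := by
    unfold profile
    nlinarith
  refine le_trans ?_ main
  split_ifs with hRr
  · have e1 := mul_le_mul_of_nonneg_left (h R r z hR hr hz hz1) hw.le
    refine le_trans ?_ e1
    have := bubble_le_rpow (r := r) hε ha.le hr
    have h9 : 0 ≤ K * (z ^ (-a) * (1 - z) ^ 2) := by positivity
    nlinarith
  · push Not at hRr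
    rw [cutoff_eq_one hR hr.le hRr.le,
      cutoff_eq_one (r := r * z) hR (by positivity) (by nlinarith)]
    have : cutoff R (r / z) ≤ 1 := cutoff_le_one
    nlinarith

lemma profile_nonneg (hε : 0 < ε) : 0 ≤ profile ε a R r :=
  mul_nonneg (bubble_pos hε).le cutoff_nonneg

lemma profile_le_bubble (hε : 0 < ε) : profile ε a R r ≤ bubble ε a r :=
  mul_le_of_le_one_right (bubble_pos hε).le cutoff_le_one

lemma profile_eq_zero (hR : 0 < R) (h : 2 * R ≤ r) : profile ε a R r = 0 := by
  rw [profile, cutoff_eq_zero hR h, mul_zero]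

/-- The profile is even and smooth, hence its oscillation near the origin is quadratic. -/
lemma exists_profile_sub_le (hε : 0 < ε) (ha : 0 ≤ a) (hR : 0 < R) :
    ∃ C, 0 ≤ C ∧ ∀ r r' m : ℝ, 0 ≤ r → 0 ≤ r' → r ≤ m → r' ≤ m →
      |profile ε a R r - profile ε a R r'| ≤ C * min 1 (m ^ 2) := by
  set W := ε ^ (-(a / 2)) with hW
  have hW0 : 0 < W := by positivity
  set A := W * (a / 2 / ε) + W / R ^ 2 with hA
  have hA0 : 0 ≤ A := by positivity
  have hub : ∀ r, profile ε a R r ≤ W := fun r =>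
    (profile_le_bubble hε).trans (bubble_le hε ha)
  have hlb : ∀ r, 0 ≤ r → W - A * r ^ 2 ≤ profile ε a R r := by
    intro r hr
    rcases le_or_gt r R with h | h
    · rw [profile, cutoff_eq_one hR hr h, mul_one]
      have := sub_bubble_le (r := r) hε ha
      have : 0 ≤ W / R ^ 2 * r ^ 2 := by positivity
      rw [hA]; linarith
    · have h0 := profile_nonneg (a := a) (R := R) (r := r) hε
      have h1 : W ≤ W / R ^ 2 * r ^ 2 := by
        rw [div_mul_eq_mul_div, le_div_iff₀ (by positivity)]
        gcongr
      have h2 : 0 ≤ W * (a / 2 / ε) * r ^ 2 := by positivity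
      rw [hA]; linarith
  refine ⟨W + A, by positivity, fun r r' m hr hr' hm hm' => ?_⟩
  have hm0 := hr.trans hm
  have q1 : A * r ^ 2 ≤ A * m ^ 2 := by gcongr
  have q2 : A * r' ^ 2 ≤ A * m ^ 2 := by gcongr
  have p1 := hub r
  have p2 := hub r'
  have p3 := hlb r hr
  have p4 := hlb r' hr'
  have p5 := profile_nonneg (a := a) (R := R) (r := r) hε
  have p6 := profile_nonneg (a := a) (R := R) (r := r') hε
  have hm2 := sq_nonneg m
  rcases min_cases (1 : ℝ) (m ^ 2) with ⟨h, -⟩ | ⟨h, -⟩ <;> rw [h, abs_le] <;>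
    constructor <;> nlinarith

end RadialProfile

section Inversion

open Metric EuclideanGeometry

variable {d : ℕ}

lemma nontrivial_Ed (hd : 0 < d) : Nontrivial (Ed d) := by
  have : Nonempty (Fin d) := ⟨⟨0, hd⟩⟩
  infer_instance

lemma integrableOn_norm_rpow (hd : 0 < d) {b : ℝ} (hb : b < d) (R : ℝ) :
    IntegrableOn (fun y : Ed d => ‖y‖ ^ (-b)) (ball 0 R) := by
  have := nontrivial_Ed hd
  rw [integrableOn_fun_norm_addHaar volume (f := fun r : ℝ => r ^ (-b))]
  rcases le_or_gt R 0 with hR | hR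
  · simp [Ioo_eq_empty_of_le hR]
  have h1 : (-1 : ℝ) < d - 1 - b := by linarith
  have h2 := (intervalIntegral.intervalIntegrable_rpow' (a := 0) (b := R) h1)
  rw [intervalIntegrable_iff_integrableOn_Ioo_of_le hR.le] at h2
  refine h2.congr_fun (fun y hy => ?_) measurableSet_Ioo
  have hy0 : 0 < y := hy.1
  rw [smul_eq_mul, finrank_euclideanSpace_fin, ← Real.rpow_natCast, ← Real.rpow_add hy0,
    Nat.cast_sub (by omega)]
  push_cast
  ring_nf

lemma exists_integral_norm_rpow (d : ℕ) (b : ℝ) :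
    ∃ C, 0 ≤ C ∧ ∀ R : ℝ, 0 < R →
      ∫ y in ball (0 : Ed d) R, ‖y‖ ^ (-b) = C * R ^ ((d : ℝ) - b) := by
  refine ⟨∫ y in ball (0 : Ed d) 1, ‖y‖ ^ (-b),
    integral_nonneg fun y => by positivity, fun R hR => ?_⟩
  have h := Measure.setIntegral_comp_smul_of_pos volume (fun y : Ed d => ‖y‖ ^ (-b))
    (ball (0 : Ed d) 1) hR
  rw [smul_unitBall_of_pos hR, finrank_euclideanSpace_fin, smul_eq_mul] at h
  have h2 : ∀ y : Ed d, ‖R • y‖ ^ (-b) = R ^ (-b) * ‖y‖ ^ (-b) := fun y => by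
    rw [norm_smul, Real.norm_of_nonneg hR.le, Real.mul_rpow hR.le (norm_nonneg _)]
  simp_rw [h2] at h
  rw [integral_const_mul, eq_inv_mul_iff_mul_eq₀ (by positivity)] at h
  rw [← h, sub_eq_add_neg, Real.rpow_add hR, Real.rpow_natCast]
  ring

lemma exists_integral_product_rpow (hd : 0 < d) {a b : ℝ} (ha0 : 0 < a) (had : a < d)
    (hb0 : 0 < b) (hbd : b < d) :
    ∃ C, 0 ≤ C ∧ ∀ x : Ed d, x ≠ 0 →
      IntegrableOn (fun y => ‖y‖ ^ (-a) * ‖x - y‖ ^ (-b)) (ball 0 ‖x‖) ∧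
      ∫ y in ball 0 ‖x‖, ‖y‖ ^ (-a) * ‖x - y‖ ^ (-b) ≤ C * ‖x‖ ^ ((d : ℝ) - a - b) := by
  obtain ⟨C₁, hC₁, h₁⟩ := exists_integral_norm_rpow d a
  obtain ⟨C₂, hC₂, h₂⟩ := exists_integral_norm_rpow d b
  refine ⟨(1 / 2) ^ (-b) * C₁ + (1 / 2) ^ (-a) * (C₂ * 2 ^ ((d : ℝ) - b)), by positivity,
    fun x hx => ?_⟩
  set r := ‖x‖
  have hr : 0 < r := norm_pos_iff.2 hx
  have i1 : IntegrableOn (fun y : Ed d => (r / 2) ^ (-b) * ‖y‖ ^ (-a)) (ball 0 r) :=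
    (integrableOn_norm_rpow hd had r).const_mul _
  set g : Ed d → ℝ := (ball (0 : Ed d) (2 * r)).indicator fun y => ‖y‖ ^ (-b)
  have hg : Integrable g := (integrable_indicator_iff measurableSet_ball).2
    (integrableOn_norm_rpow hd hbd _)
  have hg0 : ∀ y, 0 ≤ g y := fun y => indicator_nonneg (fun _ _ => by positivity) y
  have hgx : Integrable fun y => g (x - y) := hg.comp_sub_left x
  have hgi : ∫ y, g (x - y) = C₂ * (2 * r) ^ ((d : ℝ) - b) := by
    rw [integral_sub_left_eq_self g volume x, integral_indicator measurableSet_ball,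
      h₂ _ (by positivity)]
  have i2 : Integrable fun y => (r / 2) ^ (-a) * g (x - y) := hgx.const_mul _
  have hpt : ∀ y ∈ ball (0 : Ed d) r, ‖y‖ ^ (-a) * ‖x - y‖ ^ (-b) ≤
      (r / 2) ^ (-b) * ‖y‖ ^ (-a) + (r / 2) ^ (-a) * g (x - y) := by
    intro y hy
    rw [mem_ball_zero_iff] at hy
    have hgy : g (x - y) = ‖x - y‖ ^ (-b) := by
      apply indicator_of_mem
      rw [mem_ball_zero_iff]
      exact (norm_sub_le x y).trans_lt (by change r + _ < _; linarith)
    have t1 : 0 ≤ (r / 2) ^ (-a) * g (x - y) := mul_nonneg (by positivity) (hg0 _)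
    have t2 : 0 ≤ (r / 2) ^ (-b) * ‖y‖ ^ (-a) := by positivity
    rcases lt_or_ge ‖y‖ (r / 2) with h | h
    · have : r / 2 ≤ ‖x - y‖ := by
        have := norm_sub_norm_le x y
        change r - _ ≤ _ at this
        linarith
      have h3 : ‖x - y‖ ^ (-b) ≤ (r / 2) ^ (-b) :=
        Real.rpow_le_rpow_of_nonpos (by positivity) this (by linarith)
      have := mul_le_mul_of_nonneg_left h3 (Real.rpow_nonneg (norm_nonneg y) (-a))
      linarith
    · have h3 : ‖y‖ ^ (-a) ≤ (r / 2) ^ (-a) :=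
        Real.rpow_le_rpow_of_nonpos (by positivity) h (by linarith)
      have := mul_le_mul_of_nonneg_right h3 (Real.rpow_nonneg (norm_nonneg (x - y)) (-b))
      rw [hgy] at t1 ⊢
      linarith
  have i3 : IntegrableOn (fun y => (r / 2) ^ (-b) * ‖y‖ ^ (-a) + (r / 2) ^ (-a) * g (x - y))
      (ball 0 r) := i1.add i2.integrableOn
  have i4 : IntegrableOn (fun y => ‖y‖ ^ (-a) * ‖x - y‖ ^ (-b)) (ball 0 r) := by
    refine i3.mono' (by fun_prop) ?_
    filter_upwards [ae_restrict_mem measurableSet_ball] with y hy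
    rw [Real.norm_of_nonneg (by positivity)]
    exact hpt y hy
  refine ⟨i4, (setIntegral_mono_on i4 i3 measurableSet_ball hpt).trans ?_⟩
  rw [integral_add i1 i2.integrableOn, integral_const_mul, integral_const_mul, h₁ r hr]
  have h5 : ∫ y in ball 0 r, g (x - y) ≤ C₂ * (2 * r) ^ ((d : ℝ) - b) := by
    rw [← hgi]
    exact setIntegral_le_integral hgx (Eventually.of_forall fun y => hg0 _)
  have e1 : (r / 2) ^ (-b) * (C₁ * r ^ ((d : ℝ) - a)) =
      (1 / 2) ^ (-b) * C₁ * r ^ ((d : ℝ) - a - b) := by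
    rw [div_eq_mul_one_div, Real.mul_rpow hr.le (by norm_num), sub_eq_add_neg _ b,
      Real.rpow_add hr]
    ring
  have e2 : (r / 2) ^ (-a) * (C₂ * (2 * r) ^ ((d : ℝ) - b)) =
      (1 / 2) ^ (-a) * (C₂ * 2 ^ ((d : ℝ) - b)) * r ^ ((d : ℝ) - a - b) := by
    rw [div_eq_mul_one_div, Real.mul_rpow hr.le (by norm_num), Real.mul_rpow (by norm_num) hr.le,
      show (d : ℝ) - a - b = -a + (d - b) by ring, Real.rpow_add hr (-a)]
    ring
  rw [e1, add_mul, ← e2]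
  gcongr

/-- The pairing set inside the ball of radius `‖x‖`. -/
def innerSet (x : Ed d) (z : ℝ) : Set (Ed d) := {y | 0 < ‖y‖ ∧ ‖y‖ ≤ z * ‖x‖}

/-- The image of the inner set under the inversion in the sphere of radius `‖x‖`. -/
def outerSet (x : Ed d) (z : ℝ) : Set (Ed d) := {y | 0 < ‖y‖ ∧ ‖x‖ ≤ z * ‖y‖}

lemma measurableSet_innerSet (x : Ed d) (z : ℝ) : MeasurableSet (innerSet x z) :=
  (measurableSet_lt measurable_const measurable_norm).inter
    (measurableSet_le measurable_norm measurable_const)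

lemma measurableSet_outerSet (x : Ed d) (z : ℝ) : MeasurableSet (outerSet x z) :=
  (measurableSet_lt measurable_const measurable_norm).inter
    (measurableSet_le measurable_const (measurable_norm.const_mul z))

lemma norm_inversion_zero (x : Ed d) (y : Ed d) : ‖inversion 0 ‖x‖ y‖ = ‖x‖ ^ 2 / ‖y‖ := by
  have := dist_inversion_center (0 : Ed d) y ‖x‖
  rwa [dist_zero_right, dist_zero_right] at this

lemma norm_sub_inversion_zero {x y : Ed d} (hx : x ≠ 0) (hy : y ≠ 0) :
    ‖x - inversion 0 ‖x‖ y‖ = ‖x‖ / ‖y‖ * ‖x - y‖ := by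
  have h1 : inversion (0 : Ed d) ‖x‖ x = x := by
    simpa using inversion_dist_center (0 : Ed d) x
  have := dist_inversion_inversion hx hy ‖x‖
  rw [h1, dist_zero_right, dist_zero_right, dist_eq_norm, dist_eq_norm] at this
  rw [this]
  have hx' := norm_pos_iff.2 hx
  field_simp

lemma image_inversion_innerSet {x : Ed d} (hx : x ≠ 0) {z : ℝ} :
    inversion 0 ‖x‖ '' innerSet x z = outerSet x z := by
  have hx' := norm_pos_iff.2 hx
  have key : ∀ y : Ed d, 0 < ‖y‖ → 0 < ‖inversion 0 ‖x‖ y‖ := fun y hy => by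
    rw [norm_inversion_zero]; positivity
  ext y
  constructor
  · rintro ⟨w, ⟨hw0, hw⟩, rfl⟩
    refine ⟨key w hw0, ?_⟩
    rw [norm_inversion_zero, mul_div_assoc', le_div_iff₀ hw0]
    nlinarith
  · rintro ⟨hy0, hy⟩
    refine ⟨inversion 0 ‖x‖ y, ⟨key y hy0, ?_⟩, inversion_inversion _ hx'.ne' _⟩
    rw [norm_inversion_zero, div_le_iff₀ hy0]
    nlinarith

lemma abs_det_inversion_fderiv {x y : Ed d} :
    |((‖x‖ / dist y 0) ^ 2 • (((ℝ ∙ (y - 0))ᗮ.reflection : Ed d ≃L[ℝ] Ed d) :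
      Ed d →L[ℝ] Ed d)).det| = (‖x‖ / ‖y‖) ^ (2 * d) := by
  have h : ∀ (c : ℝ) (f : Ed d →L[ℝ] Ed d), (c • f).det = c ^ d * f.det := by
    intro c f
    have := LinearMap.det_smul c (f : Ed d →ₗ[ℝ] Ed d)
    rw [finrank_euclideanSpace_fin] at this
    exact this
  rw [h, abs_mul]
  have h2 : |((((ℝ ∙ (y - 0))ᗮ.reflection : Ed d ≃L[ℝ] Ed d) : Ed d →L[ℝ] Ed d)).det| = 1 := by
    have := Submodule.det_reflection (𝕜 := ℝ) (ℝ ∙ (y - 0))ᗮ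
    change |LinearMap.det _| = 1
    erw [this]
    simp
  rw [h2, dist_zero_right, mul_one, abs_of_nonneg (by positivity), ← pow_mul]

lemma integral_outerSet {x : Ed d} (hx : x ≠ 0) {z : ℝ} (f : Ed d → ℝ) :
    ∫ y in outerSet x z, f y =
      ∫ y in innerSet x z, (‖x‖ / ‖y‖) ^ (2 * d) * f (inversion 0 ‖x‖ y) := by
  have hx' := norm_pos_iff.2 hx
  rw [← image_inversion_innerSet hx, integral_image_eq_integral_abs_det_fderiv_smul volume
    (measurableSet_innerSet x z)
    (fun y hy => (hasFDerivAt_inversion (norm_pos_iff.1 hy.1)).hasFDerivWithinAt)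
    (inversion_injective _ hx'.ne').injOn]
  refine integral_congr_ae (Eventually.of_forall fun y => ?_)
  simp only [smul_eq_mul]
  congr 1
  exact abs_det_inversion_fderiv

lemma integrableOn_outerSet {x : Ed d} (hx : x ≠ 0) {z : ℝ} {f : Ed d → ℝ}
    (hf : IntegrableOn f (outerSet x z)) :
    IntegrableOn (fun y => (‖x‖ / ‖y‖) ^ (2 * d) * f (inversion 0 ‖x‖ y)) (innerSet x z) := by
  have hx' := norm_pos_iff.2 hx
  rw [← image_inversion_innerSet hx, integrableOn_image_iff_integrableOn_abs_det_fderiv_smul volume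
    (measurableSet_innerSet x z)
    (fun y hy => (hasFDerivAt_inversion (norm_pos_iff.1 hy.1)).hasFDerivWithinAt)
    (inversion_injective _ hx'.ne').injOn] at hf
  refine hf.congr (Eventually.of_forall fun y => ?_)
  simp only [smul_eq_mul]
  congr 1
  exact abs_det_inversion_fderiv

lemma disjoint_inner_outer {x : Ed d} {z : ℝ} (hz0 : 0 < z) (hz1 : z < 1) :
    Disjoint (innerSet x z) (outerSet x z) := by
  rw [Set.disjoint_left]
  rintro y ⟨h1, h2⟩ ⟨-, h3⟩
  have h4 : z * ‖x‖ ≤ z * (z * ‖y‖) := by gcongr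
  have h5 : z * (z * ‖y‖) < ‖y‖ := by
    have : z * z < 1 := by nlinarith
    nlinarith
  linarith

lemma inversion_weight {x y : Ed d} (hx : x ≠ 0) (hy : y ≠ 0) (s : ℝ) :
    (‖x‖ / ‖y‖) ^ (2 * d) / ‖x - inversion 0 ‖x‖ y‖ ^ ((d : ℝ) + 2 * s) =
      (‖y‖ / ‖x‖) ^ (-((d : ℝ) - 2 * s)) / ‖x - y‖ ^ ((d : ℝ) + 2 * s) := by
  have hx' := norm_pos_iff.2 hx
  have hy' := norm_pos_iff.2 hy
  have hq : 0 < ‖x‖ / ‖y‖ := by positivity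
  rw [norm_sub_inversion_zero hx hy, Real.mul_rpow hq.le (norm_nonneg _), ← div_div,
    ← inv_div ‖x‖ ‖y‖, Real.inv_rpow hq.le, ← Real.rpow_neg hq.le, neg_neg,
    ← Real.rpow_natCast, ← Real.rpow_sub hq]
  congr 2
  push_cast
  ring

/-- Lower bound, uniform in the truncation, for the truncated fractional Laplacian of the
truncated bubble. -/
lemma exists_truncated_laplacian_bound {s : ℝ} (hs0 : 0 < s) (hs1 : s < 1) (hd : 2 * s < (d : ℝ)) :
    ∃ C, 0 ≤ C ∧ ∀ ε R z : ℝ, 0 < ε → 0 < R → 0 < z → z < 1 → ∀ x : Ed d, x ≠ 0 →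
      IntegrableOn (fun y => (profile ε (d - 2 * s) R ‖x‖ - profile ε (d - 2 * s) R ‖y‖) /
        ‖x - y‖ ^ ((d : ℝ) + 2 * s)) (innerSet x z ∪ outerSet x z) →
      -(if R ≤ ‖x‖ then C * ‖x‖ ^ (-(d : ℝ)) else 0) ≤
        ∫ y in innerSet x z ∪ outerSet x z,
          (profile ε (d - 2 * s) R ‖x‖ - profile ε (d - 2 * s) R ‖y‖) /
            ‖x - y‖ ^ ((d : ℝ) + 2 * s) := by
  have hd0' : (0 : ℝ) < d := by linarith
  have hd0 : 0 < d := by exact_mod_cast hd0'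
  have hd1 : (1 : ℝ) ≤ d := by exact_mod_cast hd0
  set a : ℝ := d - 2 * s with ha
  have ha0 : 0 < a := by rw [ha]; linarith
  obtain ⟨K, hK, hpair⟩ := exists_profile_pairing ha0
  obtain ⟨C, hC, hJ⟩ := exists_integral_product_rpow hd0 (a := a) (b := d - 1 + s) ha0
    (by rw [ha]; linarith) (by linarith) (by linarith)
  refine ⟨K * C, by positivity, fun ε R z hε hR hz hz1 x hx hint => ?_⟩
  have hr := norm_pos_iff.2 hx
  set r := ‖x‖ with hrdef
  set p : ℝ := d + 2 * s with hp
  set Φ := profile ε a R with hΦ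
  set f : Ed d → ℝ := fun y => (Φ r - Φ ‖y‖) / ‖x - y‖ ^ p with hf
  have hin : IntegrableOn f (innerSet x z) := hint.mono_set subset_union_left
  have hout : IntegrableOn f (outerSet x z) := hint.mono_set subset_union_right
  have hout' := integrableOn_outerSet hx hout
  rw [setIntegral_union (disjoint_inner_outer hz hz1) (measurableSet_outerSet x z) hin hout,
    integral_outerSet hx, ← integral_add hin hout']
  obtain ⟨hJi, hJb⟩ := hJ x hx
  have hsub : innerSet x z ⊆ ball 0 r := fun y hy => by
    rw [mem_ball_zero_iff]
    exact hy.2.trans_lt (by change z * r < r; nlinarith)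
  have hJi' := hJi.mono_set hsub
  set c : ℝ := if R ≤ r then K * r ^ (-(1 + s)) else 0 with hc
  have hc0 : 0 ≤ c := by rw [hc]; split_ifs <;> positivity
  have hle : ∀ y ∈ innerSet x z, -(c * (‖y‖ ^ (-a) * ‖x - y‖ ^ (-((d : ℝ) - 1 + s)))) ≤
      f y + (‖x‖ / ‖y‖) ^ (2 * d) * f (inversion 0 ‖x‖ y) := by
    rintro y ⟨hy0, hy⟩
    have hyr : ‖y‖ < r := hy.trans_lt (by change z * r < r; nlinarith)
    have hy' := norm_pos_iff.1 hy0
    have hxy : 0 < ‖x - y‖ := by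
      have := norm_sub_norm_le x y
      change r - _ ≤ _ at this
      linarith
    set ζ := ‖y‖ / r with hζ
    have hζ0 : 0 < ζ := by positivity
    have hζ1 : ζ < 1 := (div_lt_one hr).2 hyr
    have e1 : r * ζ = ‖y‖ := by rw [hζ]; field_simp
    have e2 : r / ζ = r ^ 2 / ‖y‖ := by rw [hζ]; field_simp
    have h1 := hpair ε R r ζ hε hR hr hζ0 hζ1
    rw [e1, e2] at h1
    have hw : (‖x‖ / ‖y‖) ^ (2 * d) / ‖x - inversion 0 ‖x‖ y‖ ^ p = ζ ^ (-a) / ‖x - y‖ ^ p :=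
      inversion_weight hx hy' s
    have e3 : f y + (‖x‖ / ‖y‖) ^ (2 * d) * f (inversion 0 ‖x‖ y) =
        (Φ r - Φ ‖y‖ + ζ ^ (-a) * (Φ r - Φ (r ^ 2 / ‖y‖))) / ‖x - y‖ ^ p := by
      have : (‖x‖ / ‖y‖) ^ (2 * d) * f (inversion 0 ‖x‖ y) =
          ((‖x‖ / ‖y‖) ^ (2 * d) / ‖x - inversion 0 ‖x‖ y‖ ^ p) * (Φ r - Φ (r ^ 2 / ‖y‖)) := by
        simp only [hf]
        rw [norm_inversion_zero]
        ring
      rw [this, hw]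
      simp only [hf]
      ring
    rw [e3, le_div_iff₀ (by positivity)]
    refine le_trans ?_ h1
    rw [neg_mul, neg_le_neg_iff, hc]
    split_ifs with hRr
    · have e4 : ζ ^ (-a) = r ^ a * ‖y‖ ^ (-a) := by
        rw [hζ, Real.div_rpow hy0.le hr.le, Real.rpow_neg hr.le, div_inv_eq_mul, mul_comm]
      have e5 : (1 - ζ) ^ 2 ≤ r ^ (-(1 + s)) * ‖x - y‖ ^ (1 + s) := by
        have h7 : 1 - ζ ≤ ‖x - y‖ / r := by
          have := norm_sub_norm_le x y
          change r - _ ≤ _ at this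
          rw [hζ, one_sub_div hr.ne']
          gcongr
        calc (1 - ζ) ^ 2 = (1 - ζ) ^ (2 : ℝ) := by norm_num
          _ ≤ (1 - ζ) ^ (1 + s) :=
            Real.rpow_le_rpow_of_exponent_ge (by linarith) (by linarith) (by linarith)
          _ ≤ (‖x - y‖ / r) ^ (1 + s) :=
            Real.rpow_le_rpow (by linarith) h7 (by linarith)
          _ = _ := by
            rw [Real.div_rpow hxy.le hr.le, Real.rpow_neg hr.le]; ring
      have e6 : ‖x - y‖ ^ (-((d : ℝ) - 1 + s)) * ‖x - y‖ ^ p = ‖x - y‖ ^ (1 + s) := by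
        rw [← Real.rpow_add hxy, hp]; congr 1; ring
      have e7 : r ^ (-a) * r ^ a = 1 := by rw [← Real.rpow_add hr]; simp
      calc K * r ^ (-a) * (ζ ^ (-a) * (1 - ζ) ^ 2)
          = K * ‖y‖ ^ (-a) * (1 - ζ) ^ 2 := by
            rw [e4]
            linear_combination (K * ‖y‖ ^ (-a) * (1 - ζ) ^ 2) * e7
        _ ≤ K * ‖y‖ ^ (-a) * (r ^ (-(1 + s)) * ‖x - y‖ ^ (1 + s)) := by gcongr
        _ = _ := by rw [← e6]; ring
    · rw [zero_mul, zero_mul]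
  have hmono := setIntegral_mono_on (hJi'.const_mul c).neg (hin.add hout')
    (measurableSet_innerSet x z) hle
  refine le_trans ?_ hmono
  simp only [Pi.neg_apply]
  rw [integral_neg, integral_const_mul, neg_le_neg_iff]
  have h8 : ∫ y in innerSet x z, ‖y‖ ^ (-a) * ‖x - y‖ ^ (-((d : ℝ) - 1 + s)) ≤
      C * r ^ ((d : ℝ) - a - (d - 1 + s)) :=
    (setIntegral_mono_set hJi (Eventually.of_forall fun y => by positivity)
      hsub.eventuallyLE).trans hJb
  refine (mul_le_mul_of_nonneg_left h8 hc0).trans (le_of_eq ?_)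
  rw [hc]
  split_ifs with hRr
  · have : r ^ (-(1 + s)) * r ^ ((d : ℝ) - a - (d - 1 + s)) = r ^ (-(d : ℝ)) := by
      rw [← Real.rpow_add hr, ha]; congr 1; ring
    rw [← this]; ring
  · simp

end Inversion

section SpatialEstimate

open Metric

variable {d : ℕ} {s : ℝ}

/-- Integrable majorant, in the second variable, of the truncated Gagliardo kernel. -/
def kernelMajorant (d : ℕ) (s : ℝ) (y : Ed d) : ℝ :=
  (ball (0 : Ed d) 1).indicator (fun y => ‖y‖ ^ (-((d : ℝ) - 1 + s))) y +
    (1 + ‖y‖) ^ (-((d : ℝ) + 2 * s))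

lemma integrable_kernelMajorant (hs0 : 0 < s) (hs1 : s < 1) (hd : 0 < d) :
    Integrable (kernelMajorant d s) := by
  refine Integrable.add ?_ ?_
  · exact (integrableOn_norm_rpow hd (by linarith) 1).integrable_indicator measurableSet_ball
  · exact integrable_one_add_norm (by simp; linarith)

lemma exists_min_mul_rpow_le (hs0 : 0 < s) (hs1 : s < 1) (hd : 0 < d) {R : ℝ} (hR : 0 < R) :
    ∃ C, 0 ≤ C ∧ ∀ x y : Ed d, 0 < ‖x‖ → 0 < ‖y‖ → (‖x‖ < 2 * R ∨ ‖y‖ < 2 * R) →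
      min 1 (max ‖x‖ ‖y‖ ^ 2) * max ‖x‖ ‖y‖ ^ (-((d : ℝ) + 2 * s)) ≤
        C * ((1 + ‖x‖) ^ (-(d : ℝ)) * kernelMajorant d s y) := by
  have hd1 : (1 : ℝ) ≤ d := by exact_mod_cast hd
  set p : ℝ := (d : ℝ) + 2 * s with hp
  have hp0 : 0 < p := by positivity
  set C₁ : ℝ := (2 * R) ^ (-(2 * s)) * (1 + 1 / (2 * R)) ^ (d : ℝ) * (1 + 2 * R) ^ p
  set C₂ : ℝ := (1 + 2 * R) ^ (d : ℝ) * 2 ^ p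
  have hC₁ : 0 ≤ C₁ := by positivity
  have hC₂ : 0 ≤ C₂ := by positivity
  refine ⟨C₁ + C₂, by positivity, fun x y hx hy h => ?_⟩
  set M := max ‖x‖ ‖y‖ with hM
  have hM0 : 0 < M := lt_max_of_lt_left hx
  have hK2 : (1 + ‖y‖) ^ (-p) ≤ kernelMajorant d s y :=
    le_add_of_nonneg_left (indicator_nonneg (fun _ _ => by positivity) y)
  have hK0 : 0 ≤ kernelMajorant d s y := le_trans (by positivity) hK2
  rcases le_or_gt (2 * R) ‖x‖ with hxR | hxR
  · have hyR : ‖y‖ < 2 * R := h.resolve_left hxR.not_gt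
    have e1 : min 1 (M ^ 2) * M ^ (-p) ≤ ‖x‖ ^ (-p) := by
      calc min 1 (M ^ 2) * M ^ (-p) ≤ 1 * M ^ (-p) := by gcongr; exact min_le_left _ _
        _ ≤ ‖x‖ ^ (-p) := by
          rw [one_mul]
          exact Real.rpow_le_rpow_of_nonpos hx (le_max_left _ _) (by linarith)
    have e2 : ‖x‖ ^ (-p) = ‖x‖ ^ (-(2 * s)) * ‖x‖ ^ (-(d : ℝ)) := by
      rw [← Real.rpow_add hx, hp]; congr 1; ring
    have e3 : ‖x‖ ^ (-(2 * s)) ≤ (2 * R) ^ (-(2 * s)) :=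
      Real.rpow_le_rpow_of_nonpos (by positivity) hxR (by linarith)
    have e4 : ‖x‖ ^ (-(d : ℝ)) ≤ (1 + 1 / (2 * R)) ^ (d : ℝ) * (1 + ‖x‖) ^ (-(d : ℝ)) := by
      have : (1 + ‖x‖) ^ (d : ℝ) ≤ (1 + 1 / (2 * R)) ^ (d : ℝ) * ‖x‖ ^ (d : ℝ) := by
        rw [← Real.mul_rpow (by positivity) hx.le]
        refine Real.rpow_le_rpow (by positivity) ?_ (by linarith)
        rw [add_mul, one_mul, one_div_mul_eq_div]
        have : 1 ≤ ‖x‖ / (2 * R) := (one_le_div (by positivity)).2 hxR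
        linarith
      rw [Real.rpow_neg hx.le, Real.rpow_neg (by positivity), ← div_eq_mul_inv,
        inv_eq_one_div, div_le_div_iff₀ (by positivity) (by positivity)]
      linarith
    have e5 : 1 ≤ (1 + 2 * R) ^ p * kernelMajorant d s y := by
      have h1 : (1 + 2 * R) ^ (-p) ≤ (1 + ‖y‖) ^ (-p) :=
        Real.rpow_le_rpow_of_nonpos (by positivity) (by linarith) (by linarith)
      calc 1 = (1 + 2 * R) ^ p * (1 + 2 * R) ^ (-p) := by
            rw [← Real.rpow_add (by positivity)]; simp
        _ ≤ _ := by gcongr; exact h1.trans hK2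
    calc min 1 (M ^ 2) * M ^ (-p) ≤ ‖x‖ ^ (-(2 * s)) * ‖x‖ ^ (-(d : ℝ)) * 1 := by
          rw [mul_one, ← e2]; exact e1
      _ ≤ ((2 * R) ^ (-(2 * s)) * ((1 + 1 / (2 * R)) ^ (d : ℝ) * (1 + ‖x‖) ^ (-(d : ℝ)))) *
          ((1 + 2 * R) ^ p * kernelMajorant d s y) := by gcongr
      _ = C₁ * ((1 + ‖x‖) ^ (-(d : ℝ)) * kernelMajorant d s y) := by ring
      _ ≤ _ := by gcongr; linarith
  · have e1 : 1 ≤ (1 + 2 * R) ^ (d : ℝ) * (1 + ‖x‖) ^ (-(d : ℝ)) := by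
      rw [Real.rpow_neg (by positivity), ← div_eq_mul_inv, one_le_div (by positivity)]
      gcongr
    have e2 : min 1 (M ^ 2) * M ^ (-p) ≤ 2 ^ p * kernelMajorant d s y := by
      rcases lt_or_ge ‖y‖ 1 with hy1 | hy1
      · have h1 : min 1 (M ^ 2) ≤ M ^ (1 + s) := by
          rcases le_or_gt M 1 with hM1 | hM1
          · refine (min_le_right _ _).trans ?_
            rw [← Real.rpow_natCast]
            exact Real.rpow_le_rpow_of_exponent_ge hM0 hM1 (by push_cast; linarith)
          · exact (min_le_left _ _).trans (Real.one_le_rpow hM1.le (by linarith))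
        have h2 : M ^ (1 + s) * M ^ (-p) = M ^ (-((d : ℝ) - 1 + s)) := by
          rw [← Real.rpow_add hM0, hp]; congr 1; ring
        have h3 : ‖y‖ ^ (-((d : ℝ) - 1 + s)) ≤ kernelMajorant d s y := by
          rw [kernelMajorant, indicator_of_mem (by simpa using hy1)]
          exact le_add_of_nonneg_right (by positivity)
        calc min 1 (M ^ 2) * M ^ (-p) ≤ M ^ (1 + s) * M ^ (-p) := by gcongr
          _ ≤ ‖y‖ ^ (-((d : ℝ) - 1 + s)) := by
            rw [h2]
            exact Real.rpow_le_rpow_of_nonpos hy (le_max_right _ _) (by linarith)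
          _ ≤ 1 * kernelMajorant d s y := by rwa [one_mul]
          _ ≤ _ := by gcongr; exact Real.one_le_rpow (by norm_num) hp0.le
      · calc min 1 (M ^ 2) * M ^ (-p) ≤ 1 * M ^ (-p) := by gcongr; exact min_le_left _ _
          _ ≤ ((1 + ‖y‖) / 2) ^ (-p) := by
            rw [one_mul]
            refine Real.rpow_le_rpow_of_nonpos (by positivity) ?_ (by linarith)
            have := le_max_right ‖x‖ ‖y‖
            linarith
          _ = 2 ^ p * (1 + ‖y‖) ^ (-p) := by
            rw [Real.div_rpow (by positivity) (by norm_num),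
              Real.rpow_neg (by norm_num : (0 : ℝ) ≤ 2), div_inv_eq_mul, mul_comm]
          _ ≤ _ := by gcongr
    calc min 1 (M ^ 2) * M ^ (-p) ≤ 1 * (2 ^ p * kernelMajorant d s y) := by rwa [one_mul]
      _ ≤ ((1 + 2 * R) ^ (d : ℝ) * (1 + ‖x‖) ^ (-(d : ℝ))) *
          (2 ^ p * kernelMajorant d s y) := by gcongr
      _ = C₂ * ((1 + ‖x‖) ^ (-(d : ℝ)) * kernelMajorant d s y) := by ring
      _ ≤ _ := by gcongr; linarith

/-- Pairs of nonzero points whose norms have ratio at most `z` or at least `1 / z`. -/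
def separatedPairs (d : ℕ) (z : ℝ) : Set (Ed d × Ed d) :=
  {p | 0 < ‖p.1‖ ∧ 0 < ‖p.2‖ ∧ (‖p.2‖ ≤ z * ‖p.1‖ ∨ ‖p.1‖ ≤ z * ‖p.2‖)}

lemma measurableSet_separatedPairs (z : ℝ) : MeasurableSet (separatedPairs d z) := by
  have h1 : Measurable fun p : Ed d × Ed d => ‖p.1‖ := by fun_prop
  have h2 : Measurable fun p : Ed d × Ed d => ‖p.2‖ := by fun_prop
  exact (measurableSet_lt measurable_const h1).inter
    ((measurableSet_lt measurable_const h2).inter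
      ((measurableSet_le h2 (h1.const_mul z)).union (measurableSet_le h1 (h2.const_mul z))))

lemma le_norm_sub_of_separated {z : ℝ} (hz0 : 0 < z) (hz1 : z < 1) {p : Ed d × Ed d}
    (hp : p ∈ separatedPairs d z) : (1 - z) * max ‖p.1‖ ‖p.2‖ ≤ ‖p.1 - p.2‖ := by
  obtain ⟨h1, h2, h⟩ := hp
  have h3 := norm_sub_norm_le p.1 p.2
  have h4 := norm_sub_norm_le p.2 p.1
  rw [norm_sub_rev] at h4
  rcases h with h | h
  · rw [max_eq_left (by nlinarith)]; linarith
  · rw [max_eq_right (by nlinarith)]; linarith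

lemma exists_separated_kernel_le (hs0 : 0 < s) (hs1 : s < 1) (hd : 2 * s < d)
    {ε R z : ℝ} (hε : 0 < ε) (hR : 0 < R) (hz0 : 0 < z) (hz1 : z < 1) :
    ∃ C, 0 ≤ C ∧ ∀ p ∈ separatedPairs d z,
      |profile ε (d - 2 * s) R ‖p.1‖ - profile ε (d - 2 * s) R ‖p.2‖| /
          ‖p.1 - p.2‖ ^ ((d : ℝ) + 2 * s) ≤
        C * ((1 + ‖p.1‖) ^ (-(d : ℝ)) * kernelMajorant d s p.2) := by
  have hd0 : 0 < d := by
    have : (0 : ℝ) < d := by linarith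
    exact_mod_cast this
  obtain ⟨C₁, hC₁, h₁⟩ := exists_min_mul_rpow_le (d := d) hs0 hs1 hd0 hR
  obtain ⟨C₂, hC₂, h₂⟩ := exists_profile_sub_le (ε := ε) (a := d - 2 * s) (R := R) hε
    (by linarith) hR
  refine ⟨C₂ * (1 - z) ^ (-((d : ℝ) + 2 * s)) * C₁, ?_, fun p hp => ?_⟩
  · have : 0 < 1 - z := by linarith
    positivity
  have hz : 0 < 1 - z := by linarith
  have hle := le_norm_sub_of_separated hz0 hz1 hp
  obtain ⟨hx, hy, -⟩ := hp
  set M := max ‖p.1‖ ‖p.2‖ with hM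
  have hM0 : 0 < M := lt_max_of_lt_left hx
  have hK0 : 0 ≤ kernelMajorant d s p.2 :=
    add_nonneg (indicator_nonneg (fun _ _ => by positivity) _) (by positivity)
  by_cases hsmall : ‖p.1‖ < 2 * R ∨ ‖p.2‖ < 2 * R
  · calc |profile ε (d - 2 * s) R ‖p.1‖ - profile ε (d - 2 * s) R ‖p.2‖| /
          ‖p.1 - p.2‖ ^ ((d : ℝ) + 2 * s)
        ≤ (C₂ * min 1 (M ^ 2)) / ((1 - z) * M) ^ ((d : ℝ) + 2 * s) := by
          gcongr
          exact h₂ _ _ _ hx.le hy.le (le_max_left _ _) (le_max_right _ _)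
      _ = C₂ * (1 - z) ^ (-((d : ℝ) + 2 * s)) *
          (min 1 (M ^ 2) * M ^ (-((d : ℝ) + 2 * s))) := by
          rw [Real.mul_rpow hz.le hM0.le, Real.rpow_neg hz.le, Real.rpow_neg hM0.le]
          field_simp
      _ ≤ C₂ * (1 - z) ^ (-((d : ℝ) + 2 * s)) *
          (C₁ * ((1 + ‖p.1‖) ^ (-(d : ℝ)) * kernelMajorant d s p.2)) := by
          exact mul_le_mul_of_nonneg_left (h₁ _ _ hx hy hsmall) (by positivity)
      _ = _ := by ring
  · push Not at hsmall
    rw [profile_eq_zero hR hsmall.1, profile_eq_zero hR hsmall.2]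
    simp only [sub_zero, abs_zero, zero_div]
    positivity

end SpatialEstimate

section SpatialPairing

open Metric

variable {d : ℕ} {s : ℝ}

lemma measurable_profile (ε a R : ℝ) : Measurable (profile ε a R) := by
  unfold profile bubble cutoff
  fun_prop

lemma integrableOn_separatedPairs (hs0 : 0 < s) (hs1 : s < 1) (hd : 2 * s < d)
    {ε R z : ℝ} (hε : 0 < ε) (hR : 0 < R) (hz0 : 0 < z) (hz1 : z < 1) {v : Ed d → ℝ}
    (hv : Measurable v) (hvi : Integrable fun x => v x * (1 + ‖x‖) ^ (-(d : ℝ))) :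
    IntegrableOn (fun p : Ed d × Ed d => v p.1 *
      ((profile ε (d - 2 * s) R ‖p.1‖ - profile ε (d - 2 * s) R ‖p.2‖) /
        ‖p.1 - p.2‖ ^ ((d : ℝ) + 2 * s))) (separatedPairs d z) := by
  have hd0 : 0 < d := by
    have : (0 : ℝ) < d := by linarith
    exact_mod_cast this
  have hprof := measurable_profile ε (d - 2 * s) R
  obtain ⟨C, hC, hle⟩ := exists_separated_kernel_le hs0 hs1 hd hε hR hz0 hz1
  have hprod : Integrable (fun p : Ed d × Ed d =>
      (v p.1 * (1 + ‖p.1‖) ^ (-(d : ℝ))) * kernelMajorant d s p.2) :=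
    hvi.mul_prod (integrable_kernelMajorant hs0 hs1 hd0)
  refine Integrable.mono' (hprod.norm.const_mul C).integrableOn ?_ ?_
  · exact Measurable.aestronglyMeasurable (by fun_prop)
  · refine (ae_restrict_iff' (measurableSet_separatedPairs z)).2
      (Eventually.of_forall fun p hp => ?_)
    have hK0 : 0 ≤ kernelMajorant d s p.2 :=
      add_nonneg (indicator_nonneg (fun _ _ => by positivity) _) (by positivity)
    have hw : 0 ≤ (1 + ‖p.1‖) ^ (-(d : ℝ)) := by positivity
    rw [norm_mul, norm_div, norm_mul, norm_mul, Real.norm_of_nonneg hK0, Real.norm_of_nonneg hw,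
      Real.norm_of_nonneg (by positivity : 0 ≤ ‖p.1 - p.2‖ ^ ((d : ℝ) + 2 * s))]
    calc _ ≤ ‖v p.1‖ * (C * ((1 + ‖p.1‖) ^ (-(d : ℝ)) * kernelMajorant d s p.2)) :=
          mul_le_mul_of_nonneg_left (hle p hp) (norm_nonneg _)
      _ = _ := by ring

/-- Lower bound for the truncated pairing of a nonnegative function with the fractional
Laplacian of a truncated bubble. -/
lemma exists_truncated_pairing_bound (hs0 : 0 < s) (hs1 : s < 1) (hd : 2 * s < d) :
    ∃ C, 0 ≤ C ∧ ∀ ε R z : ℝ, 0 < ε → 1 ≤ R → 0 < z → z < 1 → ∀ v : Ed d → ℝ,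
      Measurable v → (∀ x, 0 ≤ v x) → Integrable (fun x => v x * (1 + ‖x‖) ^ (-(d : ℝ))) →
      -(C * ∫ x in {x : Ed d | R ≤ ‖x‖}, v x * (1 + ‖x‖) ^ (-(d : ℝ))) ≤
        ∫ p in separatedPairs d z, v p.1 *
          ((profile ε (d - 2 * s) R ‖p.1‖ - profile ε (d - 2 * s) R ‖p.2‖) /
            ‖p.1 - p.2‖ ^ ((d : ℝ) + 2 * s)) := by
  have hd0 : 0 < d := by
    have : (0 : ℝ) < d := by linarith
    exact_mod_cast this
  have := nontrivial_Ed hd0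
  obtain ⟨C, hC, hbound⟩ := exists_truncated_laplacian_bound hs0 hs1 hd
  refine ⟨C * 2 ^ (d : ℝ), by positivity, fun ε R z hε hR hz0 hz1 v hv hv0 hvi => ?_⟩
  have hR0 : 0 < R := by linarith
  have hG := integrableOn_separatedPairs hs0 hs1 hd hε hR0 hz0 hz1 hv hvi
  set g : Ed d → Ed d → ℝ := fun x y =>
    (profile ε (d - 2 * s) R ‖x‖ - profile ε (d - 2 * s) R ‖y‖) /
      ‖x - y‖ ^ ((d : ℝ) + 2 * s) with hg
  have hT : MeasurableSet {x : Ed d | R ≤ ‖x‖} := measurableSet_le measurable_const measurable_norm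
  have hGi := hG.integrable_indicator (measurableSet_separatedPairs z)
  rw [← integral_indicator (measurableSet_separatedPairs z), Measure.volume_eq_prod,
    integral_prod _ (by rwa [← Measure.volume_eq_prod]), ← integral_indicator hT,
    ← integral_const_mul, ← integral_neg]
  have hsec : ∀ x : Ed d, x ≠ 0 → (fun y => (separatedPairs d z).indicator
      (fun p : Ed d × Ed d => v p.1 * g p.1 p.2) (x, y)) =
      (innerSet x z ∪ outerSet x z).indicator (fun y => v x * g x y) := by
    intro x hx
    funext y
    have hx' := norm_pos_iff.2 hx
    have : (x, y) ∈ separatedPairs d z ↔ y ∈ innerSet x z ∪ outerSet x z := by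
      simp only [separatedPairs, innerSet, outerSet, mem_ofPred_eq, mem_union]
      tauto
    by_cases h : y ∈ innerSet x z ∪ outerSet x z
    · rw [indicator_of_mem h, indicator_of_mem (this.2 h)]
    · rw [indicator_of_notMem h, indicator_of_notMem (mt this.1 h)]
  have hmeas : ∀ x : Ed d, MeasurableSet (innerSet x z ∪ outerSet x z) := fun x =>
    (measurableSet_innerSet x z).union (measurableSet_outerSet x z)
  have hne : ∀ᵐ x : Ed d, x ≠ 0 := by
    simp [ae_iff]
  rw [Measure.volume_eq_prod] at hGi
  refine integral_mono_ae ((hvi.indicator hT).const_mul _).neg hGi.integral_prod_left ?_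
  filter_upwards [hne, hGi.prod_right_ae] with x hx hxi
  rw [hsec x hx] at hxi
  rw [hsec x hx, integral_indicator (hmeas x), integral_const_mul]
  rcases (hv0 x).eq_or_lt with h0 | h0
  · simp [← h0, indicator]
  have hxi' : IntegrableOn (g x) (innerSet x z ∪ outerSet x z) := by
    have h1 := ((integrable_indicator_iff (hmeas x)).1 hxi).const_mul (v x)⁻¹
    refine h1.congr (Eventually.of_forall fun y => ?_)
    simp only
    rw [← mul_assoc, inv_mul_cancel₀ h0.ne', one_mul]
  have h2 := hbound ε R z hε hR0 hz0 hz1 x hx hxi'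
  refine le_trans ?_ (mul_le_mul_of_nonneg_left h2 h0.le)
  rw [mul_neg, neg_le_neg_iff]
  split_ifs with hRx
  · rw [indicator_of_mem (by exact hRx)]
    have hx' := norm_pos_iff.2 hx
    have h3 : ‖x‖ ^ (-(d : ℝ)) ≤ 2 ^ (d : ℝ) * (1 + ‖x‖) ^ (-(d : ℝ)) := by
      calc ‖x‖ ^ (-(d : ℝ)) ≤ ((1 + ‖x‖) / 2) ^ (-(d : ℝ)) :=
            Real.rpow_le_rpow_of_nonpos (by positivity) (by linarith) (by simp)
        _ = _ := by
          rw [Real.div_rpow (by positivity) (by norm_num),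
            Real.rpow_neg (by norm_num : (0 : ℝ) ≤ 2), div_inv_eq_mul, mul_comm]
    calc v x * (C * ‖x‖ ^ (-(d : ℝ)))
        ≤ v x * (C * (2 ^ (d : ℝ) * (1 + ‖x‖) ^ (-(d : ℝ)))) := by gcongr
      _ = _ := by ring
  · rw [indicator_of_notMem (by exact hRx)]
    simp

end SpatialPairing

section GagliardoBound

open Metric

variable {d : ℕ} {s : ℝ}

lemma ae_mem_iUnion_separatedPairs (hd : 0 < d) {z : ℕ → ℝ} (hz : Tendsto z atTop (𝓝 1)) :
    ∀ᵐ p : Ed d × Ed d, p ∈ ⋃ n, separatedPairs d (z n) := by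
  have := nontrivial_Ed hd
  have h1 : ∀ᵐ p : Ed d × Ed d, p.1 ≠ 0 ∧ p.2 ≠ 0 ∧ ‖p.2‖ ≠ ‖p.1‖ := by
    have hm1 : Measurable fun p : Ed d × Ed d => ‖p.1‖ := by fun_prop
    have hm2 : Measurable fun p : Ed d × Ed d => ‖p.2‖ := by fun_prop
    rw [Measure.volume_eq_prod, Measure.ae_prod_iff_ae_ae]
    · have h0 : ∀ᵐ x : Ed d, x ≠ 0 := by simp [ae_iff]
      filter_upwards [h0] with x hx
      have h2 : ∀ᵐ y : Ed d, ‖y‖ ≠ ‖x‖ := by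
        have := Measure.addHaar_sphere_of_ne_zero (volume : Measure (Ed d)) 0
          (norm_ne_zero_iff.2 hx)
        refine measure_mono_null (fun y hy => ?_) this
        simpa using hy
      filter_upwards [h0, h2] with y hy hxy using ⟨hx, hy, hxy⟩
    · exact ((measurableSet_singleton (0 : Ed d)).compl.preimage measurable_fst).inter
        (((measurableSet_singleton (0 : Ed d)).compl.preimage measurable_snd).inter
          (measurableSet_eq_fun hm2 hm1).compl)
  filter_upwards [h1] with p hp
  obtain ⟨hx, hy, hne⟩ := hp
  have hx' := norm_pos_iff.2 hx
  have hy' := norm_pos_iff.2 hy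
  rw [mem_iUnion]
  rcases lt_or_gt_of_ne hne with h | h
  · obtain ⟨n, hn⟩ := (hz.eventually_const_lt ((div_lt_one hx').2 h)).exists
    exact ⟨n, hx', hy', Or.inl ((div_lt_iff₀ hx').1 hn).le⟩
  · obtain ⟨n, hn⟩ := (hz.eventually_const_lt ((div_lt_one hy').2 h)).exists
    exact ⟨n, hx', hy', Or.inr ((div_lt_iff₀ hy').1 hn).le⟩

lemma separatedPairs_mono {z z' : ℝ} (h : z ≤ z') : separatedPairs d z ⊆ separatedPairs d z' := by
  rintro p ⟨h1, h2, h3⟩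
  exact ⟨h1, h2, h3.imp (fun h4 => h4.trans (by gcongr)) (fun h4 => h4.trans (by gcongr))⟩

lemma swap_preimage_separatedPairs (z : ℝ) :
    Prod.swap ⁻¹' separatedPairs d z = separatedPairs d z := by
  ext p
  simp only [separatedPairs, mem_preimage, mem_ofPred_eq, Prod.fst_swap, Prod.snd_swap]
  tauto

lemma exists_gagliardoE_radial_bound (hs0 : 0 < s) (hs1 : s < 1) (hd : 2 * s < d) :
    ∃ C, 0 ≤ C ∧ ∀ κ ε R : ℝ, 0 < κ → 0 < ε → 1 ≤ R → ∀ v : Ed d → ℝ,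
      Measurable v → (∀ x, 0 ≤ v x) → Integrable (fun x => v x * (1 + ‖x‖) ^ (-(d : ℝ))) →
      -(κ * C * ∫ x in {x : Ed d | R ≤ ‖x‖}, v x * (1 + ‖x‖) ^ (-(d : ℝ))) ≤
        gagliardoE d s κ v (fun y => profile ε (d - 2 * s) R ‖y‖) := by
  have hd0 : 0 < d := by
    have : (0 : ℝ) < d := by linarith
    exact_mod_cast this
  obtain ⟨C, hC, hbound⟩ := exists_truncated_pairing_bound hs0 hs1 hd
  refine ⟨C, hC, fun κ ε R hκ hε hR v hv hv0 hvi => ?_⟩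
  have hR0 : 0 < R := by linarith
  set I := ∫ x in {x : Ed d | R ≤ ‖x‖}, v x * (1 + ‖x‖) ^ (-(d : ℝ)) with hI
  have hI0 : 0 ≤ I := integral_nonneg fun x => mul_nonneg (hv0 x) (by positivity)
  set G : Ed d × Ed d → ℝ := fun p => v p.1 *
    ((profile ε (d - 2 * s) R ‖p.1‖ - profile ε (d - 2 * s) R ‖p.2‖) /
      ‖p.1 - p.2‖ ^ ((d : ℝ) + 2 * s)) with hG
  have hF : ∀ p : Ed d × Ed d, (v p.1 - v p.2) *
      (profile ε (d - 2 * s) R ‖p.1‖ - profile ε (d - 2 * s) R ‖p.2‖) /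
        ‖p.1 - p.2‖ ^ ((d : ℝ) + 2 * s) = G p + G p.swap := by
    intro p
    simp only [hG, Prod.fst_swap, Prod.snd_swap]
    rw [norm_sub_rev p.2 p.1]
    ring
  unfold gagliardoE
  simp only [hF]
  by_cases hint : Integrable fun p : Ed d × Ed d => G p + G p.swap
  swap
  · rw [integral_undef hint]
    simp only [mul_zero, Left.neg_nonpos_iff]
    positivity
  set z : ℕ → ℝ := fun n => 1 - 1 / ((n : ℝ) + 2) with hz
  have hz0 : ∀ n, 0 < z n := fun n => by
    have : (0 : ℝ) ≤ n := n.cast_nonneg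
    rw [hz]
    simp only [sub_pos]
    rw [div_lt_one (by positivity)]
    linarith
  have hz1 : ∀ n, z n < 1 := fun n => by
    have : 0 < 1 / ((n : ℝ) + 2) := by positivity
    simp only [hz]
    linarith
  have hzm : Monotone z := fun n k hnk => by
    have : (n : ℝ) ≤ k := by exact_mod_cast hnk
    simp only [hz]
    gcongr
  have hzt : Tendsto z atTop (𝓝 1) := by
    have h := (tendsto_one_div_add_atTop_nhds_zero_nat (𝕜 := ℝ)).comp (tendsto_add_atTop_nat 1)
    have h' := h.const_sub 1
    rw [sub_zero] at h'
    refine h'.congr fun n => ?_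
    simp only [Function.comp, hz]
    push_cast
    ring
  have hlim := tendsto_setIntegral_of_monotone (fun n => measurableSet_separatedPairs (d := d) (z n))
    (fun n k hnk => separatedPairs_mono (hzm hnk)) hint.integrableOn
  rw [Measure.restrict_eq_self_of_ae_mem (ae_mem_iUnion_separatedPairs hd0 hzt)] at hlim
  have hge : -(2 * (C * I)) ≤ ∫ p : Ed d × Ed d, G p + G p.swap := by
    refine ge_of_tendsto' hlim fun n => ?_
    have hGi : IntegrableOn G (separatedPairs d (z n)) :=
      integrableOn_separatedPairs hs0 hs1 hd hε hR0 (hz0 n) (hz1 n) hv hvi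
    have hsw : MeasurePreserving (Prod.swap : Ed d × Ed d → Ed d × Ed d) volume volume :=
      Measure.measurePreserving_swap
    have hemb : MeasurableEmbedding (Prod.swap : Ed d × Ed d → Ed d × Ed d) :=
      MeasurableEquiv.prodComm.measurableEmbedding
    have h1 := hsw.setIntegral_preimage_emb hemb G (separatedPairs d (z n))
    have h2 : IntegrableOn (fun p => G p.swap) (Prod.swap ⁻¹' separatedPairs d (z n)) :=
      (hsw.integrableOn_comp_preimage hemb).2 hGi
    rw [swap_preimage_separatedPairs] at h1 h2
    have h3 := hbound ε R (z n) hε hR (hz0 n) (hz1 n) v hv hv0 hvi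
    change -(C * I) ≤ ∫ p in separatedPairs d (z n), G p at h3
    rw [integral_add hGi h2, h1]
    linarith
  have : -(κ * C * I) = (κ / 2) * (-(2 * (C * I))) := by ring
  rw [this]
  exact mul_le_mul_of_nonneg_left hge (by positivity)

lemma gagliardoE_translate (κ : ℝ) (v w : Ed d → ℝ) (x₀ : Ed d) :
    gagliardoE d s κ v (fun y => w (y - x₀)) = gagliardoE d s κ (fun y => v (y + x₀)) w := by
  have : (volume : Measure (Ed d × Ed d)).IsAddRightInvariant := by
    rw [Measure.volume_eq_prod]
    infer_instance
  unfold gagliardoE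
  congr 1
  rw [← integral_add_right_eq_self _ ((x₀, x₀) : Ed d × Ed d)]
  simp

end GagliardoBound

section TestFunctions

open Metric

variable {d : ℕ} {s : ℝ}

lemma contDiff_profile_norm {ε : ℝ} (hε : 0 < ε) (a R : ℝ) (x₀ : Ed d) :
    ContDiff ℝ (⊤ : ℕ∞) fun y : Ed d => profile ε a R ‖y - x₀‖ := by
  have h : ContDiff ℝ (⊤ : ℕ∞) fun y : Ed d => ‖y - x₀‖ ^ 2 :=
    (contDiff_id.sub contDiff_const).norm_sq ℝ
  unfold profile bubble cutoff
  refine ContDiff.mul ?_ ?_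
  · refine (contDiff_const.add h).rpow_const_of_ne fun y => ?_
    positivity
  · refine Real.smoothTransition.contDiff.comp (contDiff_const.sub ?_)
    simp only [div_pow]
    exact h.div_const _

lemma isTestFn_mul_profile {ε R : ℝ} (hε : 0 < ε) (hR : 0 < R) (a : ℝ) (x₀ : Ed d) {θ : ℝ → ℝ}
    (hθ : ContDiff ℝ (⊤ : ℕ∞) θ) (hθc : HasCompactSupport θ) (hθ0 : tsupport θ ⊆ Ioi 0) :
    IsTestFn d fun p => θ p.2 * profile ε a R ‖p.1 - x₀‖ := by
  refine ⟨(hθ.comp contDiff_snd).mul ((contDiff_profile_norm hε a R x₀).comp contDiff_fst),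
    HasCompactSupport.intro ((isCompact_closedBall x₀ (2 * R)).prod hθc) fun p hp => ?_, ?_⟩
  · rw [mem_prod, not_and_or] at hp
    rcases hp with hp | hp
    · rw [profile_eq_zero hR, mul_zero]
      rw [mem_closedBall, dist_eq_norm, not_le] at hp
      exact hp.le
    · rw [image_eq_zero_of_notMem_tsupport hp, zero_mul]
  · refine (closure_minimal (t := univ ×ˢ tsupport θ) (fun p hp => ?_)
      (isClosed_univ.prod (isClosed_tsupport θ))).trans (prod_mono_right hθ0)
    exact ⟨mem_univ _, subset_tsupport θ (left_ne_zero_of_mul hp)⟩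

lemma exists_gagliardoE_bound (hs0 : 0 < s) (hs1 : s < 1) (hd : 2 * s < d) :
    ∃ C, 0 ≤ C ∧ ∀ κ ε R γ : ℝ, 0 < κ → 0 < ε → 1 ≤ R → 0 ≤ γ → γ ≤ d →
      ∀ (x₀ : Ed d) (v : Ed d → ℝ), Measurable v → (∀ x, 0 ≤ v x) →
      Integrable (fun x => v x * (1 + ‖x‖) ^ (-γ)) →
      -(κ * C * (1 + ‖x₀‖) ^ γ * (∫ x, v x * (1 + ‖x‖) ^ (-γ)) * R ^ (γ - d)) ≤
        gagliardoE d s κ v (fun y => profile ε (d - 2 * s) R ‖y - x₀‖) := by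
  obtain ⟨C, hC, h⟩ := exists_gagliardoE_radial_bound hs0 hs1 hd
  refine ⟨C, hC, fun κ ε R γ hκ hε hR hγ0 hγd x₀ v hv hv0 hvi => ?_⟩
  rw [gagliardoE_translate κ v (fun y => profile ε (d - 2 * s) R ‖y‖) x₀]
  have hw : ∀ x : Ed d, (1 + ‖x‖) ^ (-γ) ≤ (1 + ‖x₀‖) ^ γ * (1 + ‖x + x₀‖) ^ (-γ) := by
    intro x
    have h1 : (1 + ‖x + x₀‖) ^ γ ≤ (1 + ‖x₀‖) ^ γ * (1 + ‖x‖) ^ γ := by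
      rw [← Real.mul_rpow (by positivity) (by positivity)]
      refine Real.rpow_le_rpow (by positivity) ?_ hγ0
      nlinarith [norm_add_le x x₀, norm_nonneg x, norm_nonneg x₀]
    rw [Real.rpow_neg (by positivity), Real.rpow_neg (by positivity), ← div_eq_mul_inv,
      inv_eq_one_div, div_le_div_iff₀ (by positivity) (by positivity)]
    linarith
  have hvi' : Integrable fun x => v (x + x₀) * (1 + ‖x + x₀‖) ^ (-γ) :=
    hvi.comp_add_right x₀
  have hJ : ∫ x, v (x + x₀) * (1 + ‖x + x₀‖) ^ (-γ) = ∫ x, v x * (1 + ‖x‖) ^ (-γ) :=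
    integral_add_right_eq_self (fun x => v x * (1 + ‖x‖) ^ (-γ)) x₀
  have hvm : Measurable fun x => v (x + x₀) := hv.comp (measurable_add_const x₀)
  have hle1 : ∀ x : Ed d, v (x + x₀) * (1 + ‖x‖) ^ (-(d : ℝ)) ≤
      (1 + ‖x₀‖) ^ γ * (v (x + x₀) * (1 + ‖x + x₀‖) ^ (-γ)) := by
    intro x
    have h1 : (1 + ‖x‖) ^ (-(d : ℝ)) ≤ (1 + ‖x‖) ^ (-γ) :=
      Real.rpow_le_rpow_of_exponent_le (by linarith [norm_nonneg x]) (by linarith)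
    calc v (x + x₀) * (1 + ‖x‖) ^ (-(d : ℝ)) ≤
        v (x + x₀) * ((1 + ‖x₀‖) ^ γ * (1 + ‖x + x₀‖) ^ (-γ)) :=
          mul_le_mul_of_nonneg_left (h1.trans (hw x)) (hv0 _)
      _ = _ := by ring
  have hvi2 : Integrable fun x => v (x + x₀) * (1 + ‖x‖) ^ (-(d : ℝ)) := by
    refine Integrable.mono' (hvi'.const_mul ((1 + ‖x₀‖) ^ γ)) ?_ (Eventually.of_forall fun x => ?_)
    · exact Measurable.aestronglyMeasurable (by fun_prop)
    · rw [Real.norm_of_nonneg (mul_nonneg (hv0 _) (by positivity))]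
      exact hle1 x
  refine le_trans ?_ (h κ ε R hκ hε hR (fun x => v (x + x₀)) hvm (fun x => hv0 _) hvi2)
  have hT : MeasurableSet {x : Ed d | R ≤ ‖x‖} := measurableSet_le measurable_const measurable_norm
  have hle2 : ∫ x in {x : Ed d | R ≤ ‖x‖}, v (x + x₀) * (1 + ‖x‖) ^ (-(d : ℝ)) ≤
      R ^ (γ - d) * ((1 + ‖x₀‖) ^ γ * ∫ x, v x * (1 + ‖x‖) ^ (-γ)) := by
    rw [← hJ, ← integral_const_mul, ← integral_const_mul]
    refine (setIntegral_mono_on hvi2.integrableOn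
      ((hvi'.const_mul _).const_mul _).integrableOn hT fun x hx => ?_).trans
      (setIntegral_le_integral ((hvi'.const_mul _).const_mul _)
        (Eventually.of_forall fun x => ?_))
    · have hRx : R ≤ ‖x‖ := hx
      have h1 : (1 + ‖x‖) ^ (-(d : ℝ)) = (1 + ‖x‖) ^ (γ - d) * (1 + ‖x‖) ^ (-γ) := by
        rw [← Real.rpow_add (by positivity)]; congr 1; ring
      have h2 : (1 + ‖x‖) ^ (γ - d) ≤ R ^ (γ - d) :=
        Real.rpow_le_rpow_of_nonpos (by linarith) (by linarith) (by linarith)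
      have h3 : (1 + ‖x‖) ^ (-(d : ℝ)) ≤
          R ^ (γ - d) * ((1 + ‖x₀‖) ^ γ * (1 + ‖x + x₀‖) ^ (-γ)) := by
        rw [h1]
        gcongr
        exact hw x
      calc _ ≤ v (x + x₀) * (R ^ (γ - d) * ((1 + ‖x₀‖) ^ γ * (1 + ‖x + x₀‖) ^ (-γ))) :=
            mul_le_mul_of_nonneg_left h3 (hv0 _)
        _ = _ := by ring
    · have := hv0 (x + x₀)
      change (0 : ℝ) ≤ _
      positivity
  rw [neg_le_neg_iff]
  calc _ ≤ κ * C * (R ^ (γ - d) * ((1 + ‖x₀‖) ^ γ * ∫ x, v x * (1 + ‖x‖) ^ (-γ))) :=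
        mul_le_mul_of_nonneg_left hle2 (by positivity)
    _ = _ := by ring

end TestFunctions

section TimeEstimate

open Metric

variable {d : ℕ} {s m κ : ℝ} {ρ : Ed d → ℝ} {u : Ed d → ℝ → ℝ}

lemma AdmissibleWeight.ae_le {γ₀ γ c C : ℝ} (hd : 0 < d) (hγ₀ : 0 ≤ γ₀) (hγ : 0 ≤ γ)
    (hρ : AdmissibleWeight d ρ γ₀ γ c C) :
    ∀ᵐ x : Ed d, c * (1 + ‖x‖) ^ (-γ) ≤ ρ x := by
  have := nontrivial_Ed hd
  obtain ⟨hc, -, -, -, hin, hout⟩ := hρ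
  have hne : ∀ᵐ x : Ed d, x ≠ 0 := by simp [ae_iff]
  filter_upwards [hin, hout, hne] with x h1 h2 hx
  have hx' := norm_pos_iff.2 hx
  rcases le_or_gt ‖x‖ 1 with h | h
  · refine le_trans ?_ (h1 h).1
    gcongr
    exact (Real.rpow_le_one_of_one_le_of_nonpos (by linarith) (by linarith)).trans
      (Real.one_le_rpow_of_pos_of_le_one_of_nonpos hx' h (by linarith))
  · refine le_trans ?_ (h2 h).1
    exact mul_le_mul_of_nonneg_left
      (Real.rpow_le_rpow_of_nonpos hx' (by linarith) (by linarith)) hc.le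

lemma WeakSolCore.ae_ae_le (hu : WeakSolCore d s m κ ρ u) {τ : ℝ} (hτ : 0 < τ) :
    ∃ B : ℝ, 0 ≤ B ∧ ∀ᵐ t : ℝ, τ < t → ∀ᵐ x : Ed d, u x t ≤ B := by
  obtain ⟨B, hB⟩ := hu.essBdd τ hτ
  refine ⟨max B 0, le_max_right _ _, ?_⟩
  have h1 : ∀ᵐ q : ℝ × Ed d, τ < q.swap.2 → u q.swap.1 q.swap.2 ≤ B :=
    (Measure.measurePreserving_swap (μ := (volume : Measure ℝ))
      (ν := (volume : Measure (Ed d)))).quasiMeasurePreserving.ae hB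
  filter_upwards [Measure.ae_ae_of_ae_prod h1] with t ht hτt
  filter_upwards [ht] with x hx using (hx hτt).trans (le_max_left _ _)

lemma WeakSolCore.measurable_slice (hu : WeakSolCore d s m κ ρ u) (t : ℝ) :
    Measurable fun x => u x t :=
  hu.measurable.comp (measurable_id.prodMk measurable_const)

lemma WeakSolCore.exists_integral_rpow_le (hm : 1 < m) {γ₀ γ c C : ℝ} (hd : 0 < d)
    (hγ₀ : 0 ≤ γ₀) (hγ : 0 ≤ γ) (hρ : AdmissibleWeight d ρ γ₀ γ c C)
    (hu : WeakSolCore d s m κ ρ u) {τ : ℝ} (hτ : 0 < τ) :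
    ∃ J : ℝ, 0 ≤ J ∧ ∀ᵐ t : ℝ, τ < t → Integrable (fun x => u x t ^ m * (1 + ‖x‖) ^ (-γ)) ∧
      ∫ x, u x t ^ m * (1 + ‖x‖) ^ (-γ) ≤ J := by
  obtain ⟨B, hB0, hB⟩ := hu.ae_ae_le hτ
  obtain ⟨M, hM⟩ := hu.massBound
  rw [ae_restrict_iff' measurableSet_Ioi] at hM
  have hρle := hρ.ae_le hd hγ₀ hγ
  have hc := hρ.1
  refine ⟨B ^ (m - 1) * c⁻¹ * max M 0, by positivity, ?_⟩
  filter_upwards [hB, hM] with t ht hMt hτt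
  obtain ⟨hi, hiM⟩ := hMt (hτ.trans hτt)
  have hut := hu.measurable_slice t
  have hle : ∀ᵐ x : Ed d, u x t ^ m * (1 + ‖x‖) ^ (-γ) ≤
      B ^ (m - 1) * c⁻¹ * (u x t * ρ x) := by
    filter_upwards [ht hτt, hρle] with x hx hρx
    have hu0 := hu.nonneg x t
    have h1 : u x t ^ m ≤ B ^ (m - 1) * u x t := by
      rcases hu0.eq_or_lt with h | h
      · rw [← h, Real.zero_rpow (by linarith), mul_zero]
      · have : u x t ^ m = u x t ^ (m - 1) * u x t := by
          rw [← Real.rpow_add_one h.ne']; congr 1; ring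
        rw [this]
        gcongr
    have h2 : (1 + ‖x‖) ^ (-γ) ≤ c⁻¹ * ρ x := by
      rw [inv_mul_eq_div, le_div_iff₀ hc]
      linarith
    calc u x t ^ m * (1 + ‖x‖) ^ (-γ) ≤ (B ^ (m - 1) * u x t) * (c⁻¹ * ρ x) := by gcongr
      _ = _ := by ring
  have hint : Integrable fun x => u x t ^ m * (1 + ‖x‖) ^ (-γ) := by
    refine Integrable.mono' (hi.const_mul (B ^ (m - 1) * c⁻¹)) ?_ ?_
    · exact Measurable.aestronglyMeasurable (by fun_prop)
    · filter_upwards [hle] with x hx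
      rw [Real.norm_of_nonneg (mul_nonneg (Real.rpow_nonneg (hu.nonneg x t) _) (by positivity))]
      exact hx
  refine ⟨hint, (integral_mono_ae hint (hi.const_mul _) hle).trans ?_⟩
  rw [integral_const_mul]
  have := hiM.trans (le_max_left M 0)
  gcongr

lemma gagliardoE_const_mul (v w : Ed d → ℝ) (b : ℝ) :
    gagliardoE d s κ v (fun x => b * w x) = b * gagliardoE d s κ v w := by
  unfold gagliardoE
  rw [mul_left_comm, ← integral_const_mul b]
  congr 2
  funext p
  ring

/-- The mass of `ρ u(·,t)` seen through the bubble centred at `x₀`. -/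
def bubbleMass (a : ℝ) (ρ : Ed d → ℝ) (u : Ed d → ℝ → ℝ) (ε : ℝ) (x₀ : Ed d) (t : ℝ) : ℝ :=
  ∫ y, bubble ε a ‖y - x₀‖ * (u y t * ρ y)

lemma measurable_bubble (ε a : ℝ) : Measurable (bubble ε a) := by
  unfold bubble
  fun_prop

lemma exists_profile_pairing_ge (hs0 : 0 < s) (hs1 : s < 1) (hd : 2 * s < d) (hm : 1 < m)
    (hκ : 0 < κ) {γ₀ γ c C : ℝ} (hγ₀ : 0 ≤ γ₀) (hγ : 0 ≤ γ) (hγd : γ ≤ d)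
    (hρ : AdmissibleWeight d ρ γ₀ γ c C) (hu : WeakSolCore d s m κ ρ u) {θ : ℝ → ℝ}
    (hθ : ContDiff ℝ (⊤ : ℕ∞) θ) (hθc : HasCompactSupport θ) (hθ0 : tsupport θ ⊆ Ioi 0)
    (hθn : ∀ t, 0 ≤ θ t) {ε : ℝ} (hε : 0 < ε) (x₀ : Ed d) :
    ∃ K : ℝ, ∀ R : ℝ, 1 ≤ R → -(K * R ^ (γ - d)) ≤
      ∫ t in Ioi (0 : ℝ), deriv θ t *
        ∫ x, profile ε (d - 2 * s) R ‖x - x₀‖ * (u x t * ρ x) := by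
  have hd0 : 0 < d := by
    have : (0 : ℝ) < d := by linarith
    exact_mod_cast this
  obtain ⟨τ, hτ, hτθ⟩ : ∃ τ : ℝ, 0 < τ ∧ ∀ t, t ≤ τ → θ t = 0 := by
    rcases (tsupport θ).eq_empty_or_nonempty with h | h
    · refine ⟨1, one_pos, fun t _ => image_eq_zero_of_notMem_tsupport ?_⟩
      simp [h]
    · obtain ⟨t₀, ht₀, hmin⟩ := hθc.isCompact.exists_isMinOn h continuousOn_id
      have h0 : 0 < t₀ := hθ0 ht₀
      refine ⟨t₀ / 2, by positivity, fun t ht => image_eq_zero_of_notMem_tsupport fun hmem => ?_⟩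
      have : t₀ ≤ t := hmin hmem
      linarith
  obtain ⟨J, hJ0, hJ⟩ := hu.exists_integral_rpow_le hm hd0 hγ₀ hγ hρ hτ
  obtain ⟨D, hD, hbound⟩ := exists_gagliardoE_bound hs0 hs1 hd
  set K₀ : ℝ := κ * D * (1 + ‖x₀‖) ^ γ * J with hK₀
  have hθi : Integrable θ := hθ.continuous.integrable_of_hasCompactSupport hθc
  refine ⟨K₀ * ∫ t in Ioi (0 : ℝ), θ t, fun R hR => ?_⟩
  have hR0 : 0 < R := by linarith
  have hweak := hu.weakForm _ (isTestFn_mul_profile hε hR0 (d - 2 * s) x₀ hθ hθc hθ0)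
  have hdiff : Differentiable ℝ θ := hθ.differentiable (by simp)
  have e1 : ∀ t, ∫ x : Ed d, u x t *
      deriv (fun τ => θ τ * profile ε (d - 2 * s) R ‖x - x₀‖) t * ρ x =
      deriv θ t * ∫ x, profile ε (d - 2 * s) R ‖x - x₀‖ * (u x t * ρ x) := by
    intro t
    rw [← integral_const_mul]
    congr 1
    funext x
    rw [deriv_mul_const hdiff.differentiableAt]
    ring
  simp only [e1, gagliardoE_const_mul] at hweak
  have e2 : ∫ t in Ioi (0 : ℝ), deriv θ t *
        ∫ x, profile ε (d - 2 * s) R ‖x - x₀‖ * (u x t * ρ x) =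
      ∫ t in Ioi (0 : ℝ), θ t * gagliardoE d s κ (fun x => u x t ^ m)
        (fun x => profile ε (d - 2 * s) R ‖x - x₀‖) := by linarith
  rw [e2]
  have hK0 : 0 ≤ K₀ := by positivity
  have hθI : 0 ≤ ∫ t in Ioi (0 : ℝ), θ t := integral_nonneg fun t => hθn t
  by_cases hint : IntegrableOn (fun t => θ t * gagliardoE d s κ (fun x => u x t ^ m)
        (fun x => profile ε (d - 2 * s) R ‖x - x₀‖)) (Ioi 0)
  swap
  · rw [integral_undef hint, neg_nonpos]
    positivity
  have e3 : -(K₀ * (∫ t in Ioi (0 : ℝ), θ t) * R ^ (γ - d)) =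
      ∫ t in Ioi (0 : ℝ), θ t * -(K₀ * R ^ (γ - d)) := by
    rw [integral_mul_const]; ring
  rw [e3]
  refine integral_mono_ae (hθi.integrableOn.mul_const _) hint ?_
  refine ae_restrict_of_ae ?_
  filter_upwards [hJ] with t ht
  rcases le_or_gt t τ with h | h
  · simp [hτθ t h]
  · obtain ⟨hi, hiJ⟩ := ht h
    refine mul_le_mul_of_nonneg_left ?_ (hθn t)
    refine le_trans ?_ (hbound κ ε R γ hκ hε hR hγ hγd x₀ (fun x => u x t ^ m)
      ((hu.measurable_slice t).pow_const m) (fun x => Real.rpow_nonneg (hu.nonneg x t) _) hi)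
    rw [neg_le_neg_iff, hK₀]
    gcongr

end TimeEstimate

section TimeLimit

variable {d : ℕ} {s m κ : ℝ} {ρ : Ed d → ℝ} {u : Ed d → ℝ → ℝ}

lemma measurable_pairing (hρ : Measurable ρ) (hu : Measurable (Function.uncurry u))
    {f : Ed d → ℝ} (hf : Measurable f) :
    Measurable fun t => ∫ x, f x * (u x t * ρ x) := by
  have h : StronglyMeasurable (Function.uncurry fun (t : ℝ) (x : Ed d) =>
      f x * (u x t * ρ x)) := by
    refine Measurable.stronglyMeasurable ?_
    exact (hf.comp measurable_snd).mul ((hu.comp measurable_swap).mul (hρ.comp measurable_snd))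
  exact h.integral_prod_right.measurable

lemma abs_pairing_le {v : Ed d → ℝ} (hv : ∀ x, 0 ≤ v x) (hi : Integrable v) {M b : ℝ}
    (hM : ∫ x, v x ≤ M) (hb : 0 ≤ b) {f : Ed d → ℝ} (hf : ∀ x, |f x| ≤ b) :
    |∫ x, f x * v x| ≤ b * M := by
  calc |∫ x, f x * v x| ≤ ∫ x, b * v x := by
        rw [← Real.norm_eq_abs]
        refine norm_integral_le_of_norm_le (hi.const_mul b) (Eventually.of_forall fun x => ?_)
        rw [norm_mul, Real.norm_of_nonneg (hv x)]
        exact mul_le_mul_of_nonneg_right (hf x) (hv x)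
    _ ≤ b * M := by rw [integral_const_mul]; gcongr

lemma deriv_pairing_bubbleMass_nonneg (hs0 : 0 < s) (hs1 : s < 1) (hd : 2 * s < d) (hm : 1 < m)
    (hκ : 0 < κ) {γ₀ γ c C : ℝ} (hγ₀ : 0 ≤ γ₀) (hγ : 0 ≤ γ) (hγd : γ < d)
    (hρ : AdmissibleWeight d ρ γ₀ γ c C) (hu : WeakSolCore d s m κ ρ u) {θ : ℝ → ℝ}
    (hθ : ContDiff ℝ (⊤ : ℕ∞) θ) (hθc : HasCompactSupport θ) (hθ0 : tsupport θ ⊆ Ioi 0)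
    (hθn : ∀ t, 0 ≤ θ t) {ε : ℝ} (hε : 0 < ε) (x₀ : Ed d) :
    0 ≤ ∫ t in Ioi (0 : ℝ), deriv θ t * bubbleMass (d - 2 * s) ρ u ε x₀ t := by
  obtain ⟨K, hK⟩ := exists_profile_pairing_ge hs0 hs1 hd hm hκ hγ₀ hγ hγd.le hρ hu hθ hθc hθ0
    hθn hε x₀
  obtain ⟨M, hM⟩ := hu.massBound
  have ha : 0 ≤ (d : ℝ) - 2 * s := by linarith
  have hρ0 := hρ.2.2.2.1
  have hρm := hρ.2.2.1
  have hR : ∀ n : ℕ, (1 : ℝ) ≤ n + 1 := fun n => by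
    have : (0 : ℝ) ≤ n := n.cast_nonneg
    linarith
  have hRt : Tendsto (fun n : ℕ => (n : ℝ) + 1) atTop atTop :=
    tendsto_natCast_atTop_atTop.atTop_add tendsto_const_nhds
  have hdc : Continuous (deriv θ) := hθ.continuous_deriv (by simp)
  have hprof : ∀ (R : ℝ) (x : Ed d), |profile ε (d - 2 * s) R ‖x - x₀‖| ≤
      ε ^ (-(((d : ℝ) - 2 * s) / 2)) := fun R x => by
    rw [abs_of_nonneg (profile_nonneg hε)]
    exact (profile_le_bubble hε).trans (bubble_le hε ha)
  have hpm : ∀ R : ℝ, Measurable fun x : Ed d => profile ε (d - 2 * s) R ‖x - x₀‖ := fun R =>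
    (measurable_profile _ _ _).comp (measurable_id.sub_const x₀).norm
  have hlim : Tendsto (fun n : ℕ => ∫ t in Ioi (0 : ℝ), deriv θ t *
      ∫ x, profile ε (d - 2 * s) (n + 1) ‖x - x₀‖ * (u x t * ρ x)) atTop
      (𝓝 (∫ t in Ioi (0 : ℝ), deriv θ t * bubbleMass (d - 2 * s) ρ u ε x₀ t)) := by
    refine tendsto_integral_of_dominated_convergence
      (fun t => |deriv θ t| * (ε ^ (-(((d : ℝ) - 2 * s) / 2)) * M)) (fun n => ?_) ?_
      (fun n => ?_) ?_
    · exact (hdc.measurable.mul (measurable_pairing hρm hu.measurable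
        (hpm _))).aestronglyMeasurable
    · exact ((hdc.integrable_of_hasCompactSupport hθc.deriv).abs.mul_const _).integrableOn
    · filter_upwards [hM] with t ht
      rw [norm_mul, Real.norm_eq_abs, Real.norm_eq_abs]
      gcongr
      exact abs_pairing_le (fun x => mul_nonneg (hu.nonneg x t) (hρ0 x).le) ht.1 ht.2
        (by positivity) (hprof _)
    · filter_upwards [hM] with t ht
      refine Tendsto.const_mul _ ?_
      refine tendsto_integral_of_dominated_convergence
        (fun x => ε ^ (-(((d : ℝ) - 2 * s) / 2)) * (u x t * ρ x)) (fun n => ?_)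
        (ht.1.const_mul _) (fun n => Eventually.of_forall fun x => ?_)
        (Eventually.of_forall fun x => ?_)
      · exact ((hpm _).mul ((hu.measurable_slice t).mul hρm)).aestronglyMeasurable
      · have h0 : 0 ≤ u x t * ρ x := mul_nonneg (hu.nonneg x t) (hρ0 x).le
        rw [norm_mul, Real.norm_of_nonneg h0]
        exact mul_le_mul_of_nonneg_right (hprof _ x) h0
      · refine tendsto_const_nhds.congr' ?_
        filter_upwards [hRt.eventually_ge_atTop ‖x - x₀‖] with n hn
        rw [profile, cutoff_eq_one (by linarith [hR n]) (norm_nonneg _) hn, mul_one]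
  have hlow : Tendsto (fun n : ℕ => -(K * ((n : ℝ) + 1) ^ (γ - d))) atTop (𝓝 0) := by
    have h := ((tendsto_rpow_neg_atTop (y := d - γ) (by linarith)).comp hRt).const_mul K |>.neg
    simpa [Function.comp_def] using h
  exact le_of_tendsto_of_tendsto' hlow hlim fun n => hK _ (hR n)

end TimeLimit

section OneDimensional

lemma exists_nonneg_primitive {h g : ℝ → ℝ} {α β δ : ℝ} (hh : ContDiff ℝ (⊤ : ℕ∞) h)
    (hg : ContDiff ℝ (⊤ : ℕ∞) g) (hh0 : ∀ t, 0 ≤ h t) (hg0 : ∀ t, 0 ≤ g t)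
    (hhi : Integrable h) (hgi : Integrable g) (hhs : ∀ t, h t ≠ 0 → t ∈ Ioo α β)
    (hgs : ∀ t, g t ≠ 0 → t ∈ Ioo β δ) (heq : ∫ t, h t = ∫ t, g t) :
    ∃ θ : ℝ → ℝ, ContDiff ℝ (⊤ : ℕ∞) θ ∧ HasCompactSupport θ ∧ tsupport θ ⊆ Ici α ∧
      (∀ t, 0 ≤ θ t) ∧ deriv θ = fun t => h t - g t := by
  set φ : ℝ → ℝ := fun t => h t - g t with hφ
  have hφc : ContDiff ℝ (⊤ : ℕ∞) φ := hh.sub hg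
  have hφi : Integrable φ := hhi.sub hgi
  have hh1 : ∀ t, t ∉ Ioo α β → h t = 0 := fun t ht => not_not.1 (mt (hhs t) ht)
  have hg1 : ∀ t, t ∉ Ioo β δ → g t = 0 := fun t ht => not_not.1 (mt (hgs t) ht)
  set θ : ℝ → ℝ := fun t => ∫ x in Iic t, φ x with hθ
  have hθ' : ∀ t, θ t = -∫ x in Ioi t, φ x := by
    intro t
    have h1 := intervalIntegral.integral_Iic_add_Ioi (b := t) hφi.integrableOn hφi.integrableOn
    have h2 : ∫ x, φ x = 0 := by
      rw [hφ, integral_sub hhi hgi, heq, sub_self]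
    simp only [hθ]
    linarith
  have hder : ∀ t, HasDerivAt θ (φ t) t := by
    intro t
    have h1 : θ = fun t => θ 0 + ∫ x in (0 : ℝ)..t, φ x := by
      funext t
      rw [← intervalIntegral.integral_Iic_sub_Iic hφi.integrableOn hφi.integrableOn]
      simp only [hθ]
      ring
    rw [h1]
    exact (intervalIntegral.integral_hasDerivAt_right (hφi.intervalIntegrable)
      (hφc.continuous.stronglyMeasurableAtFilter _ _) hφc.continuous.continuousAt).const_add _
  have hderiv : deriv θ = φ := funext fun t => (hder t).deriv
  have hlo : ∀ t, t ≤ α → θ t = 0 := by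
    intro t ht
    refine setIntegral_eq_zero_of_forall_eq_zero fun x hx => ?_
    have hx : x ≤ t := hx
    have e1 : h x = 0 := hh1 x fun hm => by linarith [hm.1]
    by_cases hαβ : α ≤ β
    · simp only [hφ, e1, hg1 x fun hm => by linarith [hm.1], sub_self]
    · have hz : ∀ y, h y = 0 := fun y => hh1 y fun hm => by linarith [hm.1, hm.2]
      have hgz : g = 0 := by
        have : ∫ t, g t = 0 := by rw [← heq]; simp [hz]
        rw [integral_eq_zero_iff_of_nonneg hg0 hgi] at this
        exact (hg.continuous.ae_eq_iff_eq volume continuous_zero).1 this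
      simp [hφ, e1, hgz]
  have hhi' : ∀ t, max β δ ≤ t → θ t = 0 := by
    intro t ht
    rw [hθ', neg_eq_zero]
    refine setIntegral_eq_zero_of_forall_eq_zero fun x hx => ?_
    have hx : t < x := hx
    have h1 := (le_max_left β δ).trans ht
    have h2 := (le_max_right β δ).trans ht
    simp only [hφ, hh1 x fun hm => by linarith [hm.2], hg1 x fun hm => by linarith [hm.2], sub_self]
  have hsupp : ∀ t, t ∉ Icc α (max β δ) → θ t = 0 := by
    intro t ht
    rw [mem_Icc, not_and_or, not_le, not_le] at ht
    exact ht.elim (fun h => hlo t h.le) (fun h => hhi' t h.le)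
  refine ⟨θ, contDiff_infty_iff_deriv.2 ⟨fun t => (hder t).differentiableAt, hderiv ▸ hφc⟩,
    HasCompactSupport.intro isCompact_Icc hsupp, ?_, fun t => ?_, hderiv⟩
  · refine closure_minimal (fun t ht => ?_) isClosed_Ici
    by_contra hn
    exact ht (hlo t (not_le.1 hn).le)
  · rcases le_or_gt t β with h | h
    · refine setIntegral_nonneg measurableSet_Iic fun x hx => ?_
      have hx : x ≤ t := hx
      simp only [hφ, hg1 x fun hm => by linarith [hm.1], sub_zero]
      exact hh0 x
    · rw [hθ', neg_nonneg]
      refine setIntegral_nonpos measurableSet_Ioi fun x hx => ?_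
      have hx : t < x := hx
      simp only [hφ, hh1 x fun hm => by linarith [hm.2], zero_sub, Left.neg_nonpos_iff]
      exact hg0 x

/-- A bounded function on `(0,∞)` whose distributional derivative is nonpositive is a.e. at most
its essential limit at `0`. -/
lemma ae_le_of_deriv_pairing {F : ℝ → ℝ} {L b : ℝ} {N : Set ℝ} (hFm : Measurable F)
    (hFb : ∀ᵐ t ∂volume.restrict (Ioi (0 : ℝ)), |F t| ≤ b) (hN : volume N = 0)
    (hlim : Tendsto F (𝓝[Ioi 0 \ N] 0) (𝓝 L))
    (hpair : ∀ θ : ℝ → ℝ, ContDiff ℝ (⊤ : ℕ∞) θ → HasCompactSupport θ → tsupport θ ⊆ Ioi 0 →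
      (∀ t, 0 ≤ θ t) → 0 ≤ ∫ t in Ioi (0 : ℝ), deriv θ t * F t) :
    ∀ᵐ t : ℝ, 0 < t → F t ≤ L := by
  have hNae : ∀ᵐ t : ℝ, t ∉ N := measure_eq_zero_iff_ae_notMem.1 hN
  set G : ℝ → ℝ := (Ioi (0 : ℝ)).indicator F with hG
  have hGm : Measurable G := hFm.indicator measurableSet_Ioi
  have hGb : ∀ᵐ t : ℝ, ‖G t‖ ≤ |b| := by
    rw [ae_restrict_iff' measurableSet_Ioi] at hFb
    filter_upwards [hFb] with t ht
    by_cases h : t ∈ Ioi (0 : ℝ)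
    · rw [hG, indicator_of_mem h]
      exact (ht h).trans (le_abs_self b)
    · rw [hG, indicator_of_notMem h, norm_zero]
      positivity
  have hGi : LocallyIntegrable G :=
    (locallyIntegrable_const b).mono hGm.aestronglyMeasurable hGb
  have hmulG : ∀ {f : ℝ → ℝ}, Integrable f → Integrable fun t => f t * G t := fun hf =>
    hf.mul_bdd hGm.aestronglyMeasurable hGb
  have hset : ∀ f : ℝ → ℝ, ∫ t in Ioi (0 : ℝ), f t * F t = ∫ t, f t * G t := fun f => by
    rw [← integral_indicator measurableSet_Ioi]
    congr 1
    funext t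
    rw [hG, indicator_mul_right]
  have hconv : ∀ (t₀ : ℝ) (φ : ContDiffBump (0 : ℝ)), φ.rOut < t₀ →
      ∫ t, φ.normed volume (t₀ - t) * G t ≤ L := by
    intro t₀ φ hφ
    refine le_of_forall_pos_le_add fun η hη => ?_
    have hev := hlim.eventually (eventually_le_nhds (by linarith : L < L + η))
    rw [eventually_nhdsWithin_iff, Metric.eventually_nhds_iff] at hev
    obtain ⟨δ₀, hδ₀, hev⟩ := hev
    set δ := min δ₀ (t₀ - φ.rOut) with hδ
    have hδ0 : 0 < δ := lt_min hδ₀ (by linarith)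
    let ψ : ContDiffBump (δ / 2) := ⟨δ / 8, δ / 4, by positivity, by linarith⟩
    have hψs : ∀ t, ψ.normed volume t ≠ 0 → t ∈ Ioo (δ / 4) (3 * δ / 4) := by
      intro t ht
      have : t ∈ Function.support (ψ.normed volume) := ht
      rw [ψ.support_normed_eq, Real.ball_eq_Ioo] at this
      obtain ⟨h1, h2⟩ := this
      change δ / 2 - δ / 4 < t at h1
      change t < δ / 2 + δ / 4 at h2
      constructor <;> linarith
    have hφs : ∀ t, φ.normed volume (t₀ - t) ≠ 0 → t ∈ Ioo (3 * δ / 4) (t₀ + φ.rOut) := by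
      intro t ht
      have : t₀ - t ∈ Function.support (φ.normed volume) := ht
      rw [φ.support_normed_eq, Real.ball_eq_Ioo] at this
      have h3 : δ ≤ t₀ - φ.rOut := min_le_right _ _
      constructor <;> linarith [this.1, this.2]
    have hgi : Integrable fun t => φ.normed volume (t₀ - t) :=
      (φ.integrable_normed (μ := volume)).comp_sub_left t₀
    have hhi : Integrable (ψ.normed volume) := ψ.integrable_normed
    obtain ⟨θ, hθ, hθc, hθs, hθ0, hθd⟩ := exists_nonneg_primitive (α := δ / 4) (β := 3 * δ / 4)
      (δ := t₀ + φ.rOut) (h := ψ.normed volume) (g := fun t => φ.normed volume (t₀ - t))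
      ψ.contDiff_normed (φ.contDiff_normed.comp (contDiff_const.sub contDiff_id))
      ψ.nonneg_normed (fun t => φ.nonneg_normed _) hhi hgi hψs hφs (by
        rw [ψ.integral_normed, integral_sub_left_eq_self (φ.normed volume) volume t₀,
          φ.integral_normed])
    have h0 := hpair θ hθ hθc (hθs.trans (Ici_subset_Ioi.2 (by positivity))) hθ0
    rw [hset, hθd] at h0
    simp only [sub_mul] at h0
    rw [integral_sub (hmulG hhi) (hmulG hgi), sub_nonneg] at h0
    refine h0.trans ?_
    have h1 : ∫ t, ψ.normed volume t * (L + η) = L + η := by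
      rw [integral_mul_const, ψ.integral_normed, one_mul]
    rw [← h1]
    refine integral_mono_ae (hmulG hhi) (hhi.mul_const _) ?_
    filter_upwards [hNae] with t ht
    by_cases hz : ψ.normed volume t = 0
    · simp [hz]
    · obtain ⟨h2, h3⟩ := hψs t hz
      have ht0 : 0 < t := by linarith
      refine mul_le_mul_of_nonneg_left ?_ (ψ.nonneg_normed t)
      rw [hG, indicator_of_mem (by exact ht0)]
      refine hev ?_ ⟨ht0, ht⟩
      have : δ ≤ δ₀ := min_le_left _ _
      rw [Real.dist_eq, sub_zero, abs_of_pos ht0]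
      linarith
  let φ : ℕ → ContDiffBump (0 : ℝ) := fun n =>
    ⟨1 / (2 * ((n : ℝ) + 1)), 1 / ((n : ℝ) + 1), by positivity, by
      refine one_div_lt_one_div_of_lt (by positivity) ?_
      have : (0 : ℝ) ≤ n := n.cast_nonneg
      linarith⟩
  have hφt : Tendsto (fun n => (φ n).rOut) atTop (𝓝 0) :=
    tendsto_one_div_add_atTop_nhds_zero_nat
  have hφK : ∀ᶠ n in atTop, (φ n).rOut ≤ 2 * (φ n).rIn := by
    refine Eventually.of_forall fun n => le_of_eq ?_
    change 1 / ((n : ℝ) + 1) = 2 * (1 / (2 * ((n : ℝ) + 1)))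
    have : (0 : ℝ) < (n : ℝ) + 1 := by positivity
    field_simp
  filter_upwards [ContDiffBump.ae_convolution_tendsto_right_of_locallyIntegrable hφt hφK hGi]
    with t₀ ht₀ hpos
  have hGF : G t₀ = F t₀ := indicator_of_mem (by exact hpos) F
  rw [← hGF]
  refine le_of_tendsto ht₀ ?_
  filter_upwards [hφt.eventually_lt_const hpos] with n hn
  rw [convolution_eq_swap]
  exact hconv t₀ (φ n) hn

end OneDimensional

section Potentials

variable {d : ℕ} {s m κ : ℝ} {ρ : Ed d → ℝ} {u : Ed d → ℝ → ℝ}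

lemma iSup_ofReal_bubble {a r : ℝ} (ha : 0 ≤ a) (hr : 0 ≤ r) :
    ⨆ n : ℕ, ENNReal.ofReal (bubble (1 / ((n : ℝ) + 1)) a r) = ENNReal.ofReal r ^ (-a) := by
  have hmono : Monotone fun n : ℕ => ENNReal.ofReal (bubble (1 / ((n : ℝ) + 1)) a r) := by
    intro n k hnk
    refine ENNReal.ofReal_le_ofReal (Real.rpow_le_rpow_of_nonpos (by positivity) ?_ (by linarith))
    have : (n : ℝ) ≤ k := by exact_mod_cast hnk
    gcongr
  refine tendsto_nhds_unique (tendsto_atTop_iSup hmono) ?_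
  have h1 : Tendsto (fun n : ℕ => 1 / ((n : ℝ) + 1) + r ^ 2) atTop (𝓝 (0 + r ^ 2)) :=
    tendsto_one_div_add_atTop_nhds_zero_nat.add_const _
  rw [zero_add] at h1
  have h2 := ((ENNReal.continuous_rpow_const (y := -(a / 2))).tendsto _).comp
    (ENNReal.tendsto_ofReal h1)
  have h3 : ENNReal.ofReal (r ^ 2) ^ (-(a / 2)) = ENNReal.ofReal r ^ (-a) := by
    rw [ENNReal.ofReal_pow hr, ← ENNReal.rpow_natCast, ← ENNReal.rpow_mul]
    congr 1
    push_cast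
    ring
  rw [h3] at h2
  refine h2.congr fun n => ?_
  exact ENNReal.ofReal_rpow_of_pos (by positivity)

lemma measurable_bubble_norm_sub (ε a : ℝ) (x : Ed d) :
    Measurable fun y : Ed d => bubble ε a ‖y - x‖ :=
  (measurable_bubble ε a).comp (measurable_id.sub_const x).norm

lemma rieszPotMeas_eq_iSup (hd : 2 * s < d) (k : ℝ) (ν : Measure (Ed d)) (x : Ed d) :
    rieszPotMeas d s k ν x = ⨆ n : ℕ, ENNReal.ofReal k *
      ∫⁻ y, ENNReal.ofReal (bubble (1 / ((n : ℝ) + 1)) (d - 2 * s) ‖y - x‖) ∂ν := by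
  rw [rieszPotMeas, ← ENNReal.mul_iSup, ← lintegral_iSup]
  · congr 2
    funext y
    rw [iSup_ofReal_bubble (by linarith) (norm_nonneg _), norm_sub_rev, neg_sub]
  · exact fun n => (measurable_bubble_norm_sub _ _ x).ennreal_ofReal
  · intro n k hnk y
    refine ENNReal.ofReal_le_ofReal (Real.rpow_le_rpow_of_nonpos (by positivity) ?_ (by linarith))
    have : (n : ℝ) ≤ k := by exact_mod_cast hnk
    gcongr

lemma rieszPotU_eq_rieszPotMeas (k : ℝ) (hρ : Measurable ρ)
    (hu : WeakSolCore d s m κ ρ u) (x : Ed d) (t : ℝ) :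
    rieszPotU d s k ρ u x t =
      rieszPotMeas d s k (volume.withDensity fun y => ENNReal.ofReal (u y t * ρ y)) x := by
  rw [rieszPotU, rieszPotMeas, lintegral_withDensity_eq_lintegral_mul]
  · congr 2
    funext y
    rw [Pi.mul_apply, mul_comm]
  · exact ((hu.measurable_slice t).mul hρ).ennreal_ofReal
  · fun_prop

lemma lintegral_bubble_withDensity (hd : 2 * s < d) (hρ : Measurable ρ) (hρ0 : ∀ x, 0 < ρ x)
    (hu : WeakSolCore d s m κ ρ u) {t : ℝ} (hi : Integrable fun x => u x t * ρ x) {ε : ℝ}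
    (hε : 0 < ε) (x : Ed d) :
    ∫⁻ y, ENNReal.ofReal (bubble ε (d - 2 * s) ‖y - x‖)
        ∂(volume.withDensity fun y => ENNReal.ofReal (u y t * ρ y)) =
      ENNReal.ofReal (bubbleMass (d - 2 * s) ρ u ε x t) := by
  have ha : 0 ≤ (d : ℝ) - 2 * s := by linarith
  have h0 : ∀ y, 0 ≤ u y t * ρ y := fun y => mul_nonneg (hu.nonneg y t) (hρ0 y).le
  have hint : Integrable fun y => bubble ε (d - 2 * s) ‖y - x‖ * (u y t * ρ y) := by
    refine hi.bdd_mul (c := ε ^ (-(((d : ℝ) - 2 * s) / 2)))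
      (measurable_bubble_norm_sub _ _ x).aestronglyMeasurable (Eventually.of_forall fun y => ?_)
    rw [Real.norm_of_nonneg (bubble_pos hε).le]
    exact bubble_le hε ha
  have hf : Measurable fun y => ENNReal.ofReal (u y t * ρ y) :=
    ((hu.measurable_slice t).mul hρ).ennreal_ofReal
  rw [lintegral_withDensity_eq_lintegral_mul _ hf
    (measurable_bubble_norm_sub _ _ x).ennreal_ofReal, bubbleMass,
    ofReal_integral_eq_lintegral_ofReal hint
      (Eventually.of_forall fun y => mul_nonneg (bubble_pos hε).le (h0 y))]
  congr 1
  funext y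
  rw [Pi.mul_apply, mul_comm, ENNReal.ofReal_mul (bubble_pos hε).le]

lemma continuous_bubble {ε : ℝ} (hε : 0 < ε) (a : ℝ) : Continuous (bubble ε a) := by
  refine (continuous_const.add (continuous_pow 2)).rpow_const fun r => Or.inl ?_
  have h : 0 < ε + r ^ 2 := by positivity
  exact h.ne'

lemma integrable_bubble {ε a : ℝ} (hε : 0 < ε) (ha : 0 ≤ a) (μ : Measure (Ed d))
    [IsFiniteMeasure μ] (x : Ed d) : Integrable (fun y => bubble ε a ‖y - x‖) μ := by
  refine Integrable.of_bound (measurable_bubble_norm_sub _ _ x).aestronglyMeasurable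
    (ε ^ (-(a / 2))) (Eventually.of_forall fun y => ?_)
  rw [Real.norm_of_nonneg (bubble_pos hε).le]
  exact bubble_le hε ha

lemma continuous_integral_bubble {ε a : ℝ} (hε : 0 < ε) (ha : 0 ≤ a) (μ : Measure (Ed d))
    {f : Ed d → ℝ} (hf : Integrable f μ) :
    Continuous fun x => ∫ y, bubble ε a ‖y - x‖ * f y ∂μ := by
  refine continuous_of_dominated (bound := fun y => ε ^ (-(a / 2)) * ‖f y‖) (fun x => ?_)
    (fun x => Eventually.of_forall fun y => ?_) (hf.norm.const_mul _)
    (Eventually.of_forall fun y => ?_)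
  · exact (measurable_bubble_norm_sub _ _ x).aestronglyMeasurable.mul hf.aestronglyMeasurable
  · rw [norm_mul, Real.norm_of_nonneg (bubble_pos hε).le]
    exact mul_le_mul_of_nonneg_right (bubble_le hε ha) (norm_nonneg _)
  · exact ((continuous_bubble hε a).comp (continuous_const.sub continuous_id).norm).mul
      continuous_const

lemma bubbleMass_ae_le (hs0 : 0 < s) (hs1 : s < 1) (hd : 2 * s < d) (hm : 1 < m)
    (hκ : 0 < κ) {γ₀ γ c C : ℝ} (hγ₀ : 0 ≤ γ₀) (hγ : 0 ≤ γ) (hγd : γ < d)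
    (hρ : AdmissibleWeight d ρ γ₀ γ c C) {μ : Measure (Ed d)}
    (hu : IsWeakSolution d s m κ ρ μ u) {ε : ℝ} (hε : 0 < ε) (x₀ : Ed d) :
    ∀ᵐ t : ℝ, 0 < t → bubbleMass (d - 2 * s) ρ u ε x₀ t ≤
      ∫ y, bubble ε (d - 2 * s) ‖y - x₀‖ ∂μ := by
  obtain ⟨hcore, N, hN, htr⟩ := hu
  have ha : 0 ≤ (d : ℝ) - 2 * s := by linarith
  obtain ⟨M, hM⟩ := hcore.massBound
  have hb : ∀ y : Ed d, |bubble ε (d - 2 * s) ‖y - x₀‖| ≤ ε ^ (-(((d : ℝ) - 2 * s) / 2)) :=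
    fun y => by
      rw [abs_of_pos (bubble_pos hε)]
      exact bubble_le hε ha
  refine ae_le_of_deriv_pairing (N := N)
    (measurable_pairing hρ.2.2.1 hcore.measurable (measurable_bubble_norm_sub _ _ x₀))
    (b := ε ^ (-(((d : ℝ) - 2 * s) / 2)) * M) ?_ hN ?_ ?_
  · filter_upwards [hM] with t ht
    exact abs_pairing_le (fun x => mul_nonneg (hcore.nonneg x t) (hρ.2.2.2.1 x).le) ht.1 ht.2
      (by positivity) hb
  · exact htr _ ((continuous_bubble hε _).comp (continuous_id.sub continuous_const).norm) ⟨_, hb⟩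
  · intro θ hθ hθc hθ0 hθn
    exact deriv_pairing_bubbleMass_nonneg hs0 hs1 hd hm hκ hγ₀ hγ hγd hρ hcore hθ hθc hθ0 hθn hε x₀

/-- For a.e. `t > 0`, all regularized potentials are bounded by those of the initial datum. -/
lemma ae_forall_bubbleMass_le (hs0 : 0 < s) (hs1 : s < 1) (hd : 2 * s < d) (hm : 1 < m)
    (hκ : 0 < κ) {γ₀ γ c C : ℝ} (hγ₀ : 0 ≤ γ₀) (hγ : 0 ≤ γ) (hγd : γ < d)
    (hρ : AdmissibleWeight d ρ γ₀ γ c C) {μ : Measure (Ed d)} [IsFiniteMeasure μ]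
    (hu : IsWeakSolution d s m κ ρ μ u) :
    ∀ᵐ t : ℝ, 0 < t → Integrable (fun x => u x t * ρ x) ∧ ∀ (n : ℕ) (x : Ed d),
      bubbleMass (d - 2 * s) ρ u (1 / ((n : ℝ) + 1)) x t ≤
        ∫ y, bubble (1 / ((n : ℝ) + 1)) (d - 2 * s) ‖y - x‖ ∂μ := by
  have ha : 0 ≤ (d : ℝ) - 2 * s := by linarith
  have hε : ∀ n : ℕ, (0 : ℝ) < 1 / ((n : ℝ) + 1) := fun n => by positivity
  have h1 : ∀ᵐ t : ℝ, ∀ n j : ℕ, 0 < t →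
      bubbleMass (d - 2 * s) ρ u (1 / ((n : ℝ) + 1)) (TopologicalSpace.denseSeq (Ed d) j) t ≤
        ∫ y, bubble (1 / ((n : ℝ) + 1)) (d - 2 * s)
          ‖y - TopologicalSpace.denseSeq (Ed d) j‖ ∂μ :=
    ae_all_iff.2 fun n => ae_all_iff.2 fun j =>
      bubbleMass_ae_le hs0 hs1 hd hm hκ hγ₀ hγ hγd hρ hu (hε n) _
  obtain ⟨M, hM⟩ := hu.1.massBound
  rw [ae_restrict_iff' measurableSet_Ioi] at hM
  filter_upwards [h1, hM] with t ht hMt hpos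
  refine ⟨(hMt hpos).1, fun n x => ?_⟩
  have hcμ : Continuous fun x : Ed d => ∫ y, bubble (1 / ((n : ℝ) + 1)) (d - 2 * s) ‖y - x‖ ∂μ := by
    simpa using continuous_integral_bubble (hε n) ha μ (f := fun _ => (1 : ℝ))
      (integrable_const 1)
  have hclosed := isClosed_le (continuous_integral_bubble (hε n) ha volume (hMt hpos).1) hcμ
  have hsub := closure_minimal (range_subset_iff.2 fun j => ht n j hpos) hclosed
  rw [(TopologicalSpace.denseRange_denseSeq (Ed d)).closure_range] at hsub
  exact hsub (mem_univ x)

end Potentials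

/-- **Pointwise convergence of the potential to the potential of the initial
datum.** If `u` is a weak solution with initial datum `μ`, there is a
Lebesgue-null set `N ⊆ (0,∞)` such that for *every* `x ∈ ℝ^d`,
`U(x,t) → U^μ(x)` as `t → 0` with `t ∉ N`. -/
theorem potential_converges_to_initial_potential
    (d : ℕ) (s m κ k γ₀ γ c C : ℝ)
    (hs0 : 0 < s) (hs1 : s < 1) (hd : 2 * s < (d : ℝ)) (hm : 1 < m)
    (hκ : 0 < κ) (hk : 0 < k)
    (hγ₀0 : 0 ≤ γ₀) (hγ₀γ : γ₀ ≤ γ) (hγs : γ < 2 * s) (hγd : γ ≤ (d : ℝ) - 2 * s)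
    (ρ : Ed d → ℝ) (hρ : AdmissibleWeight d ρ γ₀ γ c C)
    (μ : Measure (Ed d)) (hμ : IsFiniteMeasure μ)
    (u : Ed d → ℝ → ℝ) (hu : IsWeakSolution d s m κ ρ μ u) :
    ∃ N : Set ℝ, volume N = 0 ∧
      ∀ x : Ed d, Tendsto (fun t => rieszPotU d s k ρ u x t)
        (𝓝[(Ioi (0 : ℝ)) \ N] 0) (𝓝 (rieszPotMeas d s k μ x)) := by
  have hγ : 0 ≤ γ := hγ₀0.trans hγ₀γ
  have hγd' : γ < d := by linarith
  have ha : 0 ≤ (d : ℝ) - 2 * s := by linarith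
  have hε : ∀ n : ℕ, (0 : ℝ) < 1 / ((n : ℝ) + 1) := fun n => by positivity
  have hgood := ae_forall_bubbleMass_le hs0 hs1 hd hm hκ hγ₀0 hγ hγd' hρ hu
  obtain ⟨hcore, N₀, hN₀, htr⟩ := hu
  have hρm := hρ.2.2.1
  have hρ0 := hρ.2.2.2.1
  obtain ⟨Z, hZ0, hZ⟩ : ∃ Z : Set ℝ, volume Z = 0 ∧ ∀ t, t ∉ Z → 0 < t →
      Integrable (fun x => u x t * ρ x) ∧ ∀ (n : ℕ) (x : Ed d),
        bubbleMass (d - 2 * s) ρ u (1 / ((n : ℝ) + 1)) x t ≤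
          ∫ y, bubble (1 / ((n : ℝ) + 1)) (d - 2 * s) ‖y - x‖ ∂μ :=
    ⟨_, ae_iff.1 hgood, fun t ht => by simpa only [mem_ofPred_eq, not_not] using ht⟩
  refine ⟨N₀ ∪ Z, measure_union_null hN₀ hZ0, fun x => ?_⟩
  have hmem : ∀ᶠ t in 𝓝[Ioi (0 : ℝ) \ (N₀ ∪ Z)] 0, t ∈ Ioi (0 : ℝ) \ (N₀ ∪ Z) :=
    self_mem_nhdsWithin
  have hμeq : ∀ n : ℕ, ∫⁻ y, ENNReal.ofReal (bubble (1 / ((n : ℝ) + 1)) (d - 2 * s) ‖y - x‖) ∂μ =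
      ENNReal.ofReal (∫ y, bubble (1 / ((n : ℝ) + 1)) (d - 2 * s) ‖y - x‖ ∂μ) := fun n =>
    (ofReal_integral_eq_lintegral_ofReal (integrable_bubble (hε n) ha μ x)
      (Eventually.of_forall fun y => (bubble_pos (hε n)).le)).symm
  refine tendsto_order.2 ⟨fun b hb => ?_, fun b hb => ?_⟩
  · rw [rieszPotMeas_eq_iSup hd, lt_iSup_iff] at hb
    obtain ⟨n, hn⟩ := hb
    rw [hμeq n] at hn
    have h1 := htr (fun y => bubble (1 / ((n : ℝ) + 1)) (d - 2 * s) ‖y - x‖)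
      ((continuous_bubble (hε n) _).comp (continuous_id.sub continuous_const).norm)
      ⟨_, fun y => by rw [abs_of_pos (bubble_pos (hε n))]; exact bubble_le (hε n) ha⟩
    have h2 := (ENNReal.Tendsto.const_mul (a := ENNReal.ofReal k) (ENNReal.tendsto_ofReal h1)
      (Or.inr ENNReal.ofReal_ne_top)).mono_left
      (nhdsWithin_mono 0 (sdiff_subset_sdiff_right (subset_union_left (t := Z))))
    filter_upwards [h2.eventually_const_lt hn, hmem] with t hbt ht
    obtain ⟨htpos, htN⟩ := ht
    have hg := hZ t fun h => htN (Or.inr h)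
    refine hbt.trans_le ?_
    rw [rieszPotU_eq_rieszPotMeas k hρm hcore, rieszPotMeas_eq_iSup hd]
    refine le_iSup_of_le n ?_
    rw [lintegral_bubble_withDensity hd hρm hρ0 hcore (hg htpos).1 (hε n)]
    exact le_rfl
  · filter_upwards [hmem] with t ht
    obtain ⟨htpos, htN⟩ := ht
    have hg := hZ t fun h => htN (Or.inr h)
    refine lt_of_le_of_lt ?_ hb
    rw [rieszPotU_eq_rieszPotMeas k hρm hcore, rieszPotMeas_eq_iSup hd, rieszPotMeas_eq_iSup hd]
    refine iSup_mono fun n => ?_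
    rw [lintegral_bubble_withDensity hd hρm hρ0 hcore (hg htpos).1 (hε n), hμeq n]
    gcongr
    exact (hg htpos).2 n x
end
end

section
/- Let d > 2s, and let ρ : ℝ^d → (0,∞) be measurable with c|x|^{-γ₀} ≤ ρ(x) ≤ C|x|^{-γ₀} for a.e. |x| ≤ 1 and c|x|^{-γ} ≤ ρ(x) ≤ C|x|^{-γ} for a.e. |x| > 1, where 0 < c < C, γ ∈ (0,2s) and γ₀ ∈ [0,γ]. Let v : ℝ^d → ℝ be measurable with ∫_{ℝ^d} |v(x)| ρ(x) dx < ∞ and v essentially bounded. Then the Riesz potential of ρv, namely U(x) := k ∫_{ℝ^d} |x-y|^{2s-d} ρ(y) v(y) dy, is well-defined (the integral converges absolutely for every x), is continuous on ℝ^d, bounded, and belongs to L^p(ℝ^d) for every p ∈ (d/(d-2s), ∞). -/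
open MeasureTheory Filter Topology Set
open scoped ENNReal NNReal

noncomputable section

section RieszKernel

variable {E : Type*} [NormedAddCommGroup E]

/-- The kernel `‖z‖ ^ (-β)` restricted to the open unit ball. -/
def nearKernel (β : ℝ) : E → ℝ≥0∞ :=
  (Metric.ball (0 : E) 1).indicator fun z => ENNReal.ofReal (‖z‖ ^ (-β))

/-- The kernel `‖z‖ ^ (-β)` restricted to the complement of the open unit ball. -/
def farKernel (β : ℝ) : E → ℝ≥0∞ :=
  (Metric.ball (0 : E) 1)ᶜ.indicator fun z => ENNReal.ofReal (‖z‖ ^ (-β))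

theorem nearKernel_add_farKernel (β : ℝ) (z : E) :
    nearKernel β z + farKernel β z = ENNReal.ofReal (‖z‖ ^ (-β)) :=
  congrFun (Set.indicator_self_add_compl _ _) z

theorem farKernel_le_one {β : ℝ} (hβ : 0 ≤ β) (z : E) : farKernel β z ≤ 1 := by
  by_cases hz : ‖z‖ < 1
  · simp [farKernel, hz]
  · have : ‖z‖ ^ (-β) ≤ 1 := Real.rpow_le_one_of_one_le_of_nonpos (not_lt.1 hz) (by linarith)
    simp [farKernel, hz, this]

theorem rpow_neg_mul_rpow_neg_le {a b β γ : ℝ} (ha : 0 < a) (hb : 0 < b) (hβ : 0 ≤ β)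
    (hγ : 0 ≤ γ) : a ^ (-β) * b ^ (-γ) ≤ a ^ (-(β + γ)) + b ^ (-(β + γ)) := by
  have hA : 0 ≤ a ^ (-(β + γ)) := by positivity
  have hB : 0 ≤ b ^ (-(β + γ)) := by positivity
  rcases le_total a b with h | h
  · have : b ^ (-γ) ≤ a ^ (-γ) := Real.rpow_le_rpow_of_nonpos ha h (by linarith)
    calc a ^ (-β) * b ^ (-γ) ≤ a ^ (-β) * a ^ (-γ) := by gcongr
      _ = a ^ (-(β + γ)) := by rw [← Real.rpow_add ha]; ring_nf
      _ ≤ _ := by linarith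
  · have : a ^ (-β) ≤ b ^ (-β) := Real.rpow_le_rpow_of_nonpos hb h (by linarith)
    calc a ^ (-β) * b ^ (-γ) ≤ b ^ (-β) * b ^ (-γ) := by gcongr
      _ = b ^ (-(β + γ)) := by rw [← Real.rpow_add hb]; ring_nf
      _ ≤ _ := by linarith

/-- The Riesz kernel differs from its truncation at radius `r` by at most `r ^ δ` times the
slightly more singular kernel with exponent `α + δ`. -/
theorem enorm_rpow_neg_sub_max_rpow_neg_le {α δ r : ℝ} (hα : 0 ≤ α) (hδ : 0 ≤ δ) (hr : 0 < r)
    (hr1 : r < 1) {z : E} (hz : z ≠ 0) :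
    ‖‖z‖ ^ (-α) - (max ‖z‖ r) ^ (-α)‖ₑ ≤ ENNReal.ofReal (r ^ δ) * nearKernel (α + δ) z := by
  rcases le_total r ‖z‖ with h | h
  · simp [max_eq_left h]
  · have hz0 : 0 < ‖z‖ := norm_pos_iff.2 hz
    have hle : r ^ (-α) ≤ ‖z‖ ^ (-α) := Real.rpow_le_rpow_of_nonpos hz0 h (by linarith)
    have hr0 : 0 ≤ r ^ (-α) := by positivity
    have hk : nearKernel (α + δ) z = ENNReal.ofReal (‖z‖ ^ (-(α + δ))) := by
      simp only [nearKernel]; rw [indicator_of_mem (by simpa using h.trans_lt hr1)]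
    rw [max_eq_right h, hk, ← ENNReal.ofReal_mul (by positivity),
      Real.enorm_of_nonneg (by linarith)]
    apply ENNReal.ofReal_le_ofReal
    calc ‖z‖ ^ (-α) - r ^ (-α) ≤ ‖z‖ ^ (-α) := by linarith
      _ = ‖z‖ ^ δ * ‖z‖ ^ (-(α + δ)) := by rw [← Real.rpow_add hz0]; ring_nf
      _ ≤ _ := by gcongr

variable [MeasurableSpace E] [BorelSpace E] {μ : Measure E}

@[fun_prop]
theorem measurable_nearKernel (β : ℝ) : Measurable (nearKernel β : E → ℝ≥0∞) :=
  Measurable.indicator (by fun_prop) Metric.isOpen_ball.measurableSet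

@[fun_prop]
theorem measurable_farKernel (β : ℝ) : Measurable (farKernel β : E → ℝ≥0∞) :=
  Measurable.indicator (by fun_prop) Metric.isOpen_ball.measurableSet.compl

theorem lintegral_enorm_rieszKernel_mul (α : ℝ) {f : E → ℝ} (hf : Measurable f) (x : E) :
    ∫⁻ y, ‖‖x - y‖ ^ (-α) * f y‖ₑ ∂μ =
      ∫⁻ y, nearKernel α (x - y) * ‖f y‖ₑ ∂μ + ∫⁻ y, farKernel α (x - y) * ‖f y‖ₑ ∂μ := by
  rw [← lintegral_add_left (by fun_prop)]
  refine lintegral_congr fun y => ?_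
  rw [← add_mul, nearKernel_add_farKernel, enorm_mul, Real.enorm_of_nonneg (by positivity)]

theorem continuous_integral_truncated_rieszKernel_mul {α r : ℝ} (hα : 0 ≤ α) (hr : 0 < r)
    {f : E → ℝ} (hf : Measurable f) (hfi : Integrable f μ) :
    Continuous fun x => ∫ y, (max ‖x - y‖ r) ^ (-α) * f y ∂μ := by
  refine continuous_of_dominated (bound := fun y => r ^ (-α) * |f y|) (fun x => by fun_prop)
    (fun x => ae_of_all _ fun y => ?_) (hfi.abs.const_mul _) (ae_of_all _ fun y => ?_)
  · rw [norm_mul, Real.norm_of_nonneg (by positivity), Real.norm_eq_abs]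
    exact mul_le_mul_of_nonneg_right
      (Real.rpow_le_rpow_of_nonpos hr (le_max_right _ _) (by linarith)) (abs_nonneg _)
  · refine Continuous.mul (Continuous.rpow_const (by fun_prop) fun x => Or.inl ?_)
      continuous_const
    exact (hr.trans_le (le_max_right _ _)).ne'

end RieszKernel

section RieszPotential

variable {E : Type*} [NormedAddCommGroup E] [NormedSpace ℝ E] [FiniteDimensional ℝ E]
  [MeasurableSpace E] [BorelSpace E]

variable {μ : Measure E} [μ.IsAddHaarMeasure]

theorem measurable_lintegral_sub_mul {g F : E → ℝ≥0∞} (hg : Measurable g) (hF : Measurable F) :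
    Measurable fun x => ∫⁻ y, g (x - y) * F y ∂μ := by
  refine Measurable.lintegral_prod_right' (f := fun p : E × E => g (p.1 - p.2) * F p.2) ?_
  fun_prop

theorem lintegral_lintegral_sub_mul {g F : E → ℝ≥0∞} (hg : Measurable g) (hF : Measurable F) :
    ∫⁻ x, ∫⁻ y, g (x - y) * F y ∂μ ∂μ = (∫⁻ z, g z ∂μ) * ∫⁻ y, F y ∂μ := by
  rw [lintegral_lintegral_swap (by fun_prop)]
  have h : ∀ y, ∫⁻ x, g (x - y) * F y ∂μ = (∫⁻ z, g z ∂μ) * F y := fun y => by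
    rw [lintegral_mul_const _ (by fun_prop), lintegral_sub_right_eq_self]
  simp_rw [h]
  rw [lintegral_const_mul _ hF]

/-- Young's inequality `‖g ⋆ F‖_p ≤ ‖g‖_p ‖F‖_1` for nonnegative functions. -/
theorem lintegral_rpow_lintegral_sub_mul_le {g F : E → ℝ≥0∞} (hg : Measurable g)
    (hF : Measurable F) {p : ℝ} (hp : 1 ≤ p) :
    ∫⁻ x, (∫⁻ y, g (x - y) * F y ∂μ) ^ p ∂μ ≤
      (∫⁻ z, g z ^ p ∂μ) * (∫⁻ y, F y ∂μ) * (∫⁻ y, F y ∂μ) ^ (p - 1) := by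
  have hp0 : 0 < p := by linarith
  have hinv : p⁻¹ ≤ 1 := inv_le_one_of_one_le₀ hp
  have hpt : ∀ x, (∫⁻ y, g (x - y) * F y ∂μ) ^ p ≤
      (∫⁻ y, g (x - y) ^ p * F y ∂μ) * (∫⁻ y, F y ∂μ) ^ (p - 1) := fun x => by
    have h := ENNReal.lintegral_mul_norm_pow_le (μ := μ)
      (f := fun y => g (x - y) ^ p * F y) (g := F) (by fun_prop) (by fun_prop)
      (p := p⁻¹) (q := 1 - p⁻¹) (by positivity) (by linarith) (by ring)
    have heq : ∀ y, (g (x - y) ^ p * F y) ^ p⁻¹ * F y ^ (1 - p⁻¹) = g (x - y) * F y := fun y => by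
      rw [ENNReal.mul_rpow_of_nonneg _ _ (by positivity), ← ENNReal.rpow_mul,
        mul_inv_cancel₀ hp0.ne', ENNReal.rpow_one, mul_assoc,
        ← ENNReal.rpow_add_of_nonneg _ _ (by positivity) (by linarith)]
      simp
    simp_rw [heq] at h
    calc _ ≤ _ := ENNReal.rpow_le_rpow h hp0.le
      _ = _ := by
        rw [ENNReal.mul_rpow_of_nonneg _ _ hp0.le, ← ENNReal.rpow_mul, ← ENNReal.rpow_mul,
          inv_mul_cancel₀ hp0.ne', ENNReal.rpow_one, sub_mul, inv_mul_cancel₀ hp0.ne', one_mul]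
  calc _ ≤ ∫⁻ x, (∫⁻ y, g (x - y) ^ p * F y ∂μ) * (∫⁻ y, F y ∂μ) ^ (p - 1) ∂μ := lintegral_mono hpt
    _ = _ := by
      rw [lintegral_mul_const _
        (measurable_lintegral_sub_mul (g := fun z => g z ^ p) (by fun_prop) hF),
        lintegral_lintegral_sub_mul (g := fun z => g z ^ p) (by fun_prop) hF]

theorem lintegral_nearKernel_lt_top [Nontrivial E] {β : ℝ} (hβ : β < Module.finrank ℝ E) :
    ∫⁻ z, nearKernel β z ∂μ < ⊤ := by
  have h : IntegrableOn (fun z : E => ‖z‖ ^ (-β)) (Metric.ball 0 1) μ := by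
    refine integrableOn_ball_of_norm_le_rpow (C := 1) Module.finrank_pos hβ
      (ae_of_all _ fun z => ?_)
      (Measurable.aestronglyMeasurable (by fun_prop))
    rw [one_mul, Real.norm_of_nonneg (by positivity)]
  simp only [nearKernel]
  rw [lintegral_indicator Metric.isOpen_ball.measurableSet]
  simpa [hasFiniteIntegral_iff_ofReal (ae_of_all _ fun z : E => Real.rpow_nonneg (norm_nonneg z) _)]
    using h.hasFiniteIntegral

theorem lintegral_farKernel_rpow_lt_top {β p : ℝ} (hβ : 0 ≤ β) (hp : 0 < p)
    (hβp : Module.finrank ℝ E < β * p) :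
    ∫⁻ z, (farKernel β z : ℝ≥0∞) ^ p ∂μ < ⊤ := by
  have hle : ∀ z : E, (farKernel β z) ^ p ≤
      ENNReal.ofReal (2 ^ (β * p)) * ENNReal.ofReal ((1 + ‖z‖) ^ (-(β * p))) := fun z => by
    by_cases hz : ‖z‖ < 1
    · simp [farKernel, hz, hp]
    · have hz1 : 1 ≤ ‖z‖ := not_lt.1 hz
      have hzf : farKernel β z = ENNReal.ofReal (‖z‖ ^ (-β)) := by simp [farKernel, hz]
      rw [hzf, ENNReal.ofReal_rpow_of_nonneg (by positivity) hp.le,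
        ← ENNReal.ofReal_mul (by positivity), ← Real.rpow_mul (by positivity), neg_mul]
      apply ENNReal.ofReal_le_ofReal
      rw [Real.rpow_neg (by positivity), Real.rpow_neg (by positivity), ← div_eq_mul_inv,
        ← Real.div_rpow (by positivity) (by positivity), ← Real.inv_rpow (by positivity)]
      refine Real.rpow_le_rpow (by positivity) ?_ (by positivity)
      rw [inv_eq_one_div, div_le_div_iff₀ (by linarith) (by linarith)]
      linarith
  calc _ ≤ _ := lintegral_mono hle
    _ = _ := lintegral_const_mul _ (by fun_prop)
    _ < ⊤ := ENNReal.mul_lt_top ENNReal.ofReal_lt_top (finite_integral_one_add_norm hβp)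

/-- The near part of the potential of a function dominated by `‖y‖ ^ (-γ)` is bounded. -/
theorem exists_lintegral_nearKernel_mul_le [Nontrivial E] {β γ A : ℝ} (hβ : 0 ≤ β) (hγ : 0 ≤ γ)
    (hβγ : β + γ < Module.finrank ℝ E) {F : E → ℝ≥0∞}
    (hF : ∀ᵐ y ∂μ, F y ≤ ENNReal.ofReal (A * ‖y‖ ^ (-γ))) :
    ∃ M : ℝ≥0∞, M ≠ ⊤ ∧ ∀ x, ∫⁻ y, nearKernel β (x - y) * F y ∂μ ≤ M := by
  set W : ℝ≥0∞ := ∫⁻ z, nearKernel (β + γ) z ∂μ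
  have hW : W ≠ ⊤ := (lintegral_nearKernel_lt_top hβγ).ne
  set D : ℝ≥0∞ := ∫⁻ z, (Metric.ball (0 : E) 1).indicator (fun _ => (1 : ℝ≥0∞)) z ∂μ
  have hmeas : Measurable ((Metric.ball (0 : E) 1).indicator (fun _ => (1 : ℝ≥0∞))) :=
    measurable_const.indicator Metric.isOpen_ball.measurableSet
  have hD : D ≠ ⊤ := by
    simp only [D]
    rw [lintegral_indicator Metric.isOpen_ball.measurableSet, setLIntegral_one]
    exact measure_ball_lt_top.ne
  refine ⟨ENNReal.ofReal A * (W + W + D), by finiteness, fun x => ?_⟩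
  have hpt : ∀ᵐ y ∂μ, nearKernel β (x - y) * F y ≤ ENNReal.ofReal A *
      (nearKernel (β + γ) (x - y) + nearKernel (β + γ) y +
        (Metric.ball (0 : E) 1).indicator (fun _ => (1 : ℝ≥0∞)) (x - y)) := by
    filter_upwards [hF, Measure.ae_ne μ x, Measure.ae_ne μ 0] with y hy hyx hy0
    by_cases hxy : ‖x - y‖ < 1
    · have ha : 0 < ‖x - y‖ := norm_pos_iff.2 (sub_ne_zero.2 hyx.symm)
      have hb : 0 < ‖y‖ := norm_pos_iff.2 hy0
      have h1 : nearKernel β (x - y) = ENNReal.ofReal (‖x - y‖ ^ (-β)) := by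
        simp [nearKernel, hxy]
      have h2 : nearKernel (β + γ) (x - y) = ENNReal.ofReal (‖x - y‖ ^ (-(β + γ))) := by
        simp only [nearKernel]; rw [indicator_of_mem (by simpa using hxy)]
      have h3 : ENNReal.ofReal (‖y‖ ^ (-(β + γ))) ≤ nearKernel (β + γ) y + 1 := by
        rw [← nearKernel_add_farKernel]
        gcongr
        exact farKernel_le_one (by linarith) y
      have h4 : (Metric.ball (0 : E) 1).indicator (fun _ => (1 : ℝ≥0∞)) (x - y) = 1 := by
        simp [hxy]
      rw [h4, add_assoc]
      calc nearKernel β (x - y) * F y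
          ≤ ENNReal.ofReal (‖x - y‖ ^ (-β)) * ENNReal.ofReal (A * ‖y‖ ^ (-γ)) := by
            rw [h1]; gcongr
        _ = ENNReal.ofReal A * ENNReal.ofReal (‖x - y‖ ^ (-β) * ‖y‖ ^ (-γ)) := by
            rw [ENNReal.ofReal_mul' (by positivity), ENNReal.ofReal_mul (by positivity)]; ring
        _ ≤ ENNReal.ofReal A *
              ENNReal.ofReal (‖x - y‖ ^ (-(β + γ)) + ‖y‖ ^ (-(β + γ))) := by
            gcongr
            exact rpow_neg_mul_rpow_neg_le ha hb hβ hγ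
        _ ≤ _ := by
            rw [ENNReal.ofReal_add (by positivity) (by positivity), h2]
            gcongr
    · simp [nearKernel, hxy]
  calc _ ≤ _ := lintegral_mono_ae hpt
    _ = _ := by
      rw [lintegral_const_mul _ (by fun_prop), lintegral_add_left (by fun_prop),
        lintegral_add_left (by fun_prop), lintegral_sub_left_eq_self (nearKernel (β + γ)),
        lintegral_sub_left_eq_self ((Metric.ball (0 : E) 1).indicator (fun _ => (1 : ℝ≥0∞)))]

theorem exists_lintegral_enorm_rieszKernel_mul_le [Nontrivial E] {α γ A : ℝ} (hα : 0 ≤ α)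
    (hγ : 0 ≤ γ) (hαγ : α + γ < Module.finrank ℝ E) {f : E → ℝ} (hf : Measurable f)
    (hfi : Integrable f μ) (hfA : ∀ᵐ y ∂μ, |f y| ≤ A * ‖y‖ ^ (-γ)) :
    ∃ M : ℝ≥0∞, M ≠ ⊤ ∧ ∀ x, ∫⁻ y, ‖‖x - y‖ ^ (-α) * f y‖ₑ ∂μ ≤ M := by
  have hF : ∀ᵐ y ∂μ, ‖f y‖ₑ ≤ ENNReal.ofReal (A * ‖y‖ ^ (-γ)) := hfA.mono fun y hy => by
    rw [Real.enorm_eq_ofReal_abs]; exact ENNReal.ofReal_le_ofReal hy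
  obtain ⟨M, hM, hMx⟩ := exists_lintegral_nearKernel_mul_le hα hγ hαγ hF
  refine ⟨M + ∫⁻ y, ‖f y‖ₑ ∂μ, ENNReal.add_ne_top.2 ⟨hM, hfi.hasFiniteIntegral.ne⟩, fun x => ?_⟩
  rw [lintegral_enorm_rieszKernel_mul α hf]
  gcongr with y
  · exact hMx x
  · exact mul_le_of_le_one_left' (farKernel_le_one hα _)

theorem integrable_rieszKernel_mul [Nontrivial E] {α γ A : ℝ} (hα : 0 ≤ α)
    (hγ : 0 ≤ γ) (hαγ : α + γ < Module.finrank ℝ E) {f : E → ℝ} (hf : Measurable f)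
    (hfi : Integrable f μ) (hfA : ∀ᵐ y ∂μ, |f y| ≤ A * ‖y‖ ^ (-γ)) (x : E) :
    Integrable (fun y => ‖x - y‖ ^ (-α) * f y) μ := by
  obtain ⟨M, hM, hMx⟩ := exists_lintegral_enorm_rieszKernel_mul_le hα hγ hαγ hf hfi hfA
  exact ⟨by fun_prop, (hMx x).trans_lt hM.lt_top⟩

theorem continuous_integral_rieszKernel_mul [Nontrivial E] {α γ A : ℝ} (hα : 0 ≤ α)
    (hγ : 0 ≤ γ) (hαγ : α + γ < Module.finrank ℝ E) {f : E → ℝ} (hf : Measurable f)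
    (hfi : Integrable f μ) (hfA : ∀ᵐ y ∂μ, |f y| ≤ A * ‖y‖ ^ (-γ)) :
    Continuous fun x => ∫ y, ‖x - y‖ ^ (-α) * f y ∂μ := by
  obtain ⟨δ, hδ, hδ'⟩ : ∃ δ : ℝ, 0 < δ ∧ (α + δ) + γ < Module.finrank ℝ E :=
    ⟨(Module.finrank ℝ E - (α + γ)) / 2, by linarith, by linarith⟩
  have hF : ∀ᵐ y ∂μ, ‖f y‖ₑ ≤ ENNReal.ofReal (A * ‖y‖ ^ (-γ)) := hfA.mono fun y hy => by
    rw [Real.enorm_eq_ofReal_abs]; exact ENNReal.ofReal_le_ofReal hy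
  obtain ⟨M, hM, hMx⟩ := exists_lintegral_nearKernel_mul_le (by linarith) hγ hδ' hF
  have hbound : ∀ r : ℝ, 0 < r → r < 1 → ∀ x,
      ‖(∫ y, ‖x - y‖ ^ (-α) * f y ∂μ) - ∫ y, (max ‖x - y‖ r) ^ (-α) * f y ∂μ‖ ≤
        r ^ δ * M.toReal := by
    intro r hr hr1 x
    have hint : Integrable (fun y => (max ‖x - y‖ r) ^ (-α) * f y) μ := by
      refine hfi.bdd_mul (c := r ^ (-α))
        (Measurable.aestronglyMeasurable (by fun_prop)) (ae_of_all _ fun y => ?_)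
      rw [Real.norm_of_nonneg (by positivity)]
      exact Real.rpow_le_rpow_of_nonpos hr (le_max_right _ _) (by linarith)
    rw [← integral_sub (integrable_rieszKernel_mul hα hγ hαγ hf hfi hfA x) hint,
      ← toReal_enorm, ← ENNReal.toReal_ofReal (show 0 ≤ r ^ δ by positivity),
      ← ENNReal.toReal_mul]
    refine ENNReal.toReal_mono (by finiteness) ((enorm_integral_le_lintegral_enorm _).trans ?_)
    calc _ ≤ ∫⁻ y, ENNReal.ofReal (r ^ δ) * (nearKernel (α + δ) (x - y) * ‖f y‖ₑ) ∂μ := by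
          refine lintegral_mono_ae ?_
          filter_upwards [Measure.ae_ne μ x] with y hy
          rw [← sub_mul, enorm_mul, ← mul_assoc]
          gcongr
          exact enorm_rpow_neg_sub_max_rpow_neg_le hα hδ.le hr hr1 (sub_ne_zero.2 hy.symm)
      _ = ENNReal.ofReal (r ^ δ) * ∫⁻ y, nearKernel (α + δ) (x - y) * ‖f y‖ₑ ∂μ :=
          lintegral_const_mul _ (by fun_prop)
      _ ≤ _ := by gcongr; exact hMx x
  refine continuous_of_uniform_approx_of_continuous fun u hu => ?_
  obtain ⟨ε, hε, hεu⟩ := Metric.mem_uniformity_dist.1 hu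
  have hlim : Tendsto (fun r : ℝ => r ^ δ * M.toReal) (𝓝[>] 0) (𝓝 0) := by
    have h : Tendsto (fun r : ℝ => r ^ δ * M.toReal) (𝓝 0) (𝓝 (0 ^ δ * M.toReal)) :=
      ((Real.continuousAt_rpow_const 0 δ (Or.inr hδ.le)).tendsto).mul_const _
    rw [Real.zero_rpow hδ.ne', zero_mul] at h
    exact h.mono_left nhdsWithin_le_nhds
  obtain ⟨r, hrε, hr0, hr1⟩ := ((hlim.eventually (gt_mem_nhds hε)).and
    (Ioo_mem_nhdsGT (zero_lt_one (α := ℝ)))).exists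
  refine ⟨_, continuous_integral_truncated_rieszKernel_mul hα hr0 hf hfi, fun x => hεu ?_⟩
  rw [dist_eq_norm]
  exact (hbound r hr0 hr1 x).trans_lt hrε

theorem lintegral_rpow_lintegral_rieszKernel_mul_lt_top [Nontrivial E] {α γ A p : ℝ} (hα : 0 ≤ α)
    (hγ : 0 ≤ γ) (hαγ : α + γ < Module.finrank ℝ E) {f : E → ℝ} (hf : Measurable f)
    (hfi : Integrable f μ) (hfA : ∀ᵐ y ∂μ, |f y| ≤ A * ‖y‖ ^ (-γ)) (hp : 1 ≤ p)
    (hαp : Module.finrank ℝ E < α * p) :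
    ∫⁻ x, (∫⁻ y, ‖‖x - y‖ ^ (-α) * f y‖ₑ ∂μ) ^ p ∂μ < ⊤ := by
  have hp0 : 0 < p := by linarith
  have hF : ∀ᵐ y ∂μ, ‖f y‖ₑ ≤ ENNReal.ofReal (A * ‖y‖ ^ (-γ)) := hfA.mono fun y hy => by
    rw [Real.enorm_eq_ofReal_abs]; exact ENNReal.ofReal_le_ofReal hy
  obtain ⟨M, hM, hMx⟩ := exists_lintegral_nearKernel_mul_le hα hγ hαγ hF
  have hf1 : ∫⁻ y, ‖f y‖ₑ ∂μ < ⊤ := hfi.hasFiniteIntegral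
  set N : E → ℝ≥0∞ := fun x => ∫⁻ y, nearKernel α (x - y) * ‖f y‖ₑ ∂μ
  set H : E → ℝ≥0∞ := fun x => ∫⁻ y, farKernel α (x - y) * ‖f y‖ₑ ∂μ
  have hNm : Measurable N := measurable_lintegral_sub_mul (by fun_prop) (by fun_prop)
  have hN : ∫⁻ x, N x ^ p ∂μ < ⊤ := by
    have hN1 : ∫⁻ x, N x ∂μ < ⊤ := by
      rw [lintegral_lintegral_sub_mul (by fun_prop) (by fun_prop)]
      exact ENNReal.mul_lt_top (lintegral_nearKernel_lt_top (by linarith)) hf1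
    calc ∫⁻ x, N x ^ p ∂μ ≤ ∫⁻ x, M ^ (p - 1) * N x ∂μ := by
          refine lintegral_mono fun x => ?_
          calc N x ^ p = N x ^ (p - 1) * N x := by
                nth_rewrite 3 [← ENNReal.rpow_one (N x)]
                rw [← ENNReal.rpow_add_of_nonneg _ _ (by linarith) zero_le_one, sub_add_cancel]
            _ ≤ _ := by gcongr; exact hMx x
      _ = M ^ (p - 1) * ∫⁻ x, N x ∂μ := lintegral_const_mul _ hNm
      _ < ⊤ := ENNReal.mul_lt_top (ENNReal.rpow_lt_top_of_nonneg (by linarith) hM) hN1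
  have hH : ∫⁻ x, H x ^ p ∂μ < ⊤ :=
    (lintegral_rpow_lintegral_sub_mul_le (by fun_prop) (by fun_prop) hp).trans_lt <|
      ENNReal.mul_lt_top (ENNReal.mul_lt_top (lintegral_farKernel_rpow_lt_top hα hp0 hαp) hf1)
        (ENNReal.rpow_lt_top_of_nonneg (by linarith) hf1.ne)
  simp_rw [lintegral_enorm_rieszKernel_mul α hf]
  calc ∫⁻ x, (N x + H x) ^ p ∂μ ≤ ∫⁻ x, 2 ^ (p - 1) * (N x ^ p + H x ^ p) ∂μ :=
        lintegral_mono fun x => ENNReal.rpow_add_le_mul_rpow_add_rpow _ _ hp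
    _ = 2 ^ (p - 1) * (∫⁻ x, N x ^ p ∂μ + ∫⁻ x, H x ^ p ∂μ) := by
        rw [lintegral_const_mul' _ _ (by finiteness), lintegral_add_left (by fun_prop)]
    _ < ⊤ := by finiteness

end RieszPotential

/-- For a bounded `v`, the function `ρ v` is dominated by a multiple of `‖x‖ ^ (-γ)`. -/
theorem AdmissibleWeight.exists_ae_abs_mul_le {d : ℕ} {ρ v : Ed d → ℝ} {γ₀ γ c C : ℝ}
    [Nontrivial (Ed d)] (hρ : AdmissibleWeight d ρ γ₀ γ c C) (hγ : γ₀ ≤ γ)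
    (hv : ∃ B : ℝ, ∀ᵐ x ∂(volume : Measure (Ed d)), |v x| ≤ B) :
    ∃ A : ℝ, ∀ᵐ x ∂(volume : Measure (Ed d)), |ρ x * v x| ≤ A * ‖x‖ ^ (-γ) := by
  obtain ⟨hc, hcC, -, hpos, hnear, hfar⟩ := hρ
  obtain ⟨B, hB⟩ := hv
  refine ⟨C * B, ?_⟩
  filter_upwards [hnear, hfar, hB, Measure.ae_ne volume 0] with x hn hf hx hx0
  have hx' : 0 < ‖x‖ := norm_pos_iff.2 hx0
  have hC : 0 < C := hc.trans hcC
  have hρx : ρ x ≤ C * ‖x‖ ^ (-γ) := by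
    rcases le_or_gt ‖x‖ 1 with h | h
    · refine (hn h).2.trans ?_
      gcongr C * ?_
      exact Real.rpow_le_rpow_of_exponent_ge hx' h (by linarith)
    · exact (hf h).2
  rw [abs_mul, abs_of_pos (hpos x)]
  calc ρ x * |v x| ≤ (C * ‖x‖ ^ (-γ)) * B := by gcongr
    _ = _ := by ring

/-- **Riesz potential of `ρv` for `v ∈ L¹_ρ ∩ L^∞`.** For an admissible weight
with `γ ∈ (0,2s)`, the Riesz potential `U(x) = k ∫ |x-y|^{2s-d} ρ(y)v(y) dy`
of `ρ v` is well-defined (absolutely convergent for every `x`), continuous,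
bounded, and lies in `L^p(ℝ^d)` for every `p ∈ (d/(d-2s), ∞)`. -/
theorem riesz_potential_weighted_Lp
    (d : ℕ) (s k γ₀ γ c C : ℝ)
    (hs0 : 0 < s) (hs1 : s < 1) (hd : 2 * s < (d : ℝ)) (hk : 0 < k)
    (hγ0 : 0 < γ) (hγs : γ < 2 * s) (hγ₀0 : 0 ≤ γ₀) (hγ₀γ : γ₀ ≤ γ)
    (ρ : Ed d → ℝ) (hρ : AdmissibleWeight d ρ γ₀ γ c C)
    (v : Ed d → ℝ) (hvm : Measurable v)
    (hvi : Integrable (fun x : Ed d => |v x| * ρ x))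
    (hvb : ∃ B : ℝ, ∀ᵐ x ∂(volume : Measure (Ed d)), |v x| ≤ B) :
    (∀ x : Ed d, Integrable
      (fun y : Ed d => ‖x - y‖ ^ (2 * s - (d : ℝ)) * (ρ y * v y))) ∧
    Continuous (fun x : Ed d =>
      k * ∫ y : Ed d, ‖x - y‖ ^ (2 * s - (d : ℝ)) * (ρ y * v y)) ∧
    (∃ B : ℝ, ∀ x : Ed d,
      |k * ∫ y : Ed d, ‖x - y‖ ^ (2 * s - (d : ℝ)) * (ρ y * v y)| ≤ B) ∧
    (∀ p : ℝ, (d : ℝ) / ((d : ℝ) - 2 * s) < p →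
      (∫⁻ x : Ed d, ENNReal.ofReal
        (|k * ∫ y : Ed d, ‖x - y‖ ^ (2 * s - (d : ℝ)) * (ρ y * v y)| ^ p)) < ⊤) := by
  have hd0 : 0 < d := by
    have : (0 : ℝ) < d := by linarith
    exact_mod_cast this
  have : Nonempty (Fin d) := ⟨⟨0, hd0⟩⟩
  have : Nontrivial (Ed d) := inferInstance
  obtain ⟨A, hA⟩ := hρ.exists_ae_abs_mul_le hγ₀γ hvb
  have hρm : Measurable ρ := hρ.2.2.1
  have hfm : Measurable fun y => ρ y * v y := by fun_prop
  have hfi : Integrable fun y => ρ y * v y := by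
    refine hvi.mono (by fun_prop) (ae_of_all _ fun y => ?_)
    simp [mul_comm]
  have hα : 0 < (d : ℝ) - 2 * s := by linarith
  have hfr : (Module.finrank ℝ (Ed d) : ℝ) = d := by simp
  have hαγ : ((d : ℝ) - 2 * s) + γ < Module.finrank ℝ (Ed d) := by rw [hfr]; linarith
  have hexp : 2 * s - (d : ℝ) = -((d : ℝ) - 2 * s) := by ring
  rw [hexp]
  refine ⟨integrable_rieszKernel_mul hα.le hγ0.le hαγ hfm hfi hA,
    (continuous_integral_rieszKernel_mul hα.le hγ0.le hαγ hfm hfi hA).const_mul k, ?_,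
    fun p hp => ?_⟩
  · obtain ⟨M, hM, hMx⟩ :=
      exists_lintegral_enorm_rieszKernel_mul_le hα.le hγ0.le hαγ hfm hfi hA
    refine ⟨k * M.toReal, fun x => ?_⟩
    rw [abs_mul, abs_of_pos hk, ← Real.norm_eq_abs (∫ y, _), ← toReal_enorm]
    gcongr
    exact (enorm_integral_le_lintegral_enorm _).trans (hMx x)
  · rw [div_lt_iff₀ hα] at hp
    have hp1 : 1 ≤ p := by
      by_contra! h
      nlinarith
    have hp0 : 0 ≤ p := by linarith
    have hlt := lintegral_rpow_lintegral_rieszKernel_mul_lt_top hα.le hγ0.le hαγ hfm hfi hA hp1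
      (by rw [hfr]; linarith)
    calc _ ≤ ∫⁻ x : Ed d, ENNReal.ofReal k ^ p *
          (∫⁻ y : Ed d, ‖‖x - y‖ ^ (-((d : ℝ) - 2 * s)) * (ρ y * v y)‖ₑ) ^ p := by
          refine lintegral_mono fun x => ?_
          rw [← ENNReal.ofReal_rpow_of_nonneg (abs_nonneg _) hp0, abs_mul, abs_of_pos hk,
            ENNReal.ofReal_mul hk.le, ENNReal.mul_rpow_of_nonneg _ _ hp0,
            ← Real.enorm_eq_ofReal_abs]
          gcongr
          exact enorm_integral_le_lintegral_enorm _
      _ = _ := lintegral_const_mul' _ _ (by finiteness)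
      _ < ⊤ := ENNReal.mul_lt_top (by finiteness) hlt
end
end
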